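/- arXiv:2012.06698 — 4 statements merged into one kernel-verified Lean document; each statement's English description precedes it below -/
import Mathlib

section
/- Let n, k, ℓ be integers with 2 ≤ k ≤ n and 1 ≤ ℓ ≤ n−1. If n ≥ k+ℓ, then f(n,k,ℓ) ≤ a(ℓ) + 2ℓ(n−ℓ), where a(ℓ) = ℓ(ℓ−1) for ℓ ≥ 2 and a(1) = 0. In particular, if n ≥ k+2ℓ, then f(n,k,ℓ) ≤ 2ℓ(n−ℓ). -/
/-!
A digraph with the fewest arcs among those with `κ_k ≥ ℓ` is automatically minimal (`fMin_le`), so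
any digraph with `κ_k ≥ ℓ` bounds `f(n,k,ℓ)` from above. Call the vertices `v < ℓ` hubs. For
`n ≥ k + ℓ` take all arcs having at least one end among the hubs; for `n ≥ k + 2ℓ` only the arcs
between hubs and non-hubs are needed. These have `ℓ(ℓ-1) + 2ℓ(n-ℓ)` and `2ℓ(n-ℓ)` arcs.

Given `S` and `r`, there is one `(S,r)`-tree for each hub `h`. It has the vertices `S ∪ {h, b_h}`,
where `b_h ∉ S` is private to `h`; the root has the child `b_h` if it is a hub and the child `h`
otherwise, and each remaining vertex other than `r` hangs from `h` if it is a non-hub and from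
`b_h` if it is a hub (`le_kappaSr_of_hubs`). In the bipartite digraph the `b_h`
are distinct non-hubs outside `S`, of which there are at least `n - ℓ - k ≥ ℓ`. In the
larger digraph a hub `h ∉ S` can serve as its own `b_h`, so non-hubs are needed only for the hubs
in `S`, and `n - ℓ ≥ k` suffices. Since a tree is determined by its parent function, arc-disjointness
amounts to each vertex of `S \ {r}` having different parents in different trees (`le_kappaSr`).
-/

/-!
Formalization of directed tree connectivity (Sun, "Extremal results for
directed tree connectivity").

A digraph (no loops, no parallel arcs) on a vertex type `V` is given by an
irreflexive adjacency relation.  Out-trees, `(S,r)`-trees, the parameters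
`κ_k`, `λ_k`, minimally generalized `(k,ℓ)`-vertex/arc-strongly connected
digraphs, the families `D_{n,1}`, `D_{n,2}` and the extremal functions
`f, g, F, G` are defined below.
-/

namespace TreeConn

/-- A digraph without loops or parallel arcs. -/
structure Dgr (V : Type) where
  Adj : V → V → Prop
  loopless : ∀ v, ¬ Adj v v

variable {V : Type}

/-- The arc set of a digraph, as a set of ordered pairs. -/
def Dgr.Arcs (D : Dgr V) : Set (V × V) := {p | D.Adj p.1 p.2}

/-- Delete a single arc. -/
def Dgr.deleteArc (D : Dgr V) (e : V × V) : Dgr V :=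
  ⟨fun u v => D.Adj u v ∧ (u, v) ≠ e, fun v h => D.loopless v h.1⟩

/-- Delete a set of arcs. -/
def Dgr.deleteArcs (D : Dgr V) (M : Set (V × V)) : Dgr V :=
  ⟨fun u v => D.Adj u v ∧ (u, v) ∉ M, fun v h => D.loopless v h.1⟩

/-- Vertices incident to some arc of the arc set `T`. -/
def averts (T : Set (V × V)) : Set V := {v | ∃ u, (u, v) ∈ T ∨ (v, u) ∈ T}

/-- Vertex set of the tree with arc set `T` and root `r`. -/
def tverts (T : Set (V × V)) (r : V) : Set V := averts T ∪ {r}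

/-- The arc set `T` forms an out-tree rooted at `r`: every vertex incident
to `T` is reachable from `r` inside `T`, the root has in-degree `0`, and
every other vertex has in-degree exactly one. -/
def IsOutTree (T : Set (V × V)) (r : V) : Prop :=
  (∀ v ∈ averts T, Relation.ReflTransGen (fun a b => (a, b) ∈ T) r v) ∧
  (∀ p ∈ T, p.2 ≠ r) ∧
  (∀ v ∈ averts T, v ≠ r → ∃! u, (u, v) ∈ T)

/-- `T` is an `(S, r)`-tree of `D`: an out-tree of `D` rooted at `r`
containing all vertices of `S`. -/
def IsSRTree (D : Dgr V) (S : Set V) (r : V) (T : Set (V × V)) : Prop :=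
  T ⊆ D.Arcs ∧ IsOutTree T r ∧ S ⊆ tverts T r

/-- `T` is an out-branching (spanning out-tree) of `D` rooted at `r`. -/
def IsOutBranching (D : Dgr V) (r : V) (T : Set (V × V)) : Prop :=
  T ⊆ D.Arcs ∧ IsOutTree T r ∧ tverts T r = Set.univ

/-- Two trees (arc sets) are arc-disjoint. -/
def ArcDisj (T₁ T₂ : Set (V × V)) : Prop := T₁ ∩ T₂ = ∅

/-- Two arc-disjoint `(S,r)`-trees are internally disjoint:
`V(T₁) ∩ V(T₂) = S`. -/
def IntDisj (S : Set V) (r : V) (T₁ T₂ : Set (V × V)) : Prop :=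
  ArcDisj T₁ T₂ ∧ tverts T₁ r ∩ tverts T₂ r = S

/-- `κ_{S,r}(D)`: maximum number of pairwise internally disjoint
`(S,r)`-trees in `D`. -/
noncomputable def kappaSr (D : Dgr V) (S : Set V) (r : V) : ℕ :=
  sSup {m | ∃ f : Fin m → Set (V × V), (∀ i, IsSRTree D S r (f i)) ∧
    ∀ i j, i ≠ j → IntDisj S r (f i) (f j)}

/-- `λ_{S,r}(D)`: maximum number of pairwise arc-disjoint
`(S,r)`-trees in `D`. -/
noncomputable def lambdaSr (D : Dgr V) (S : Set V) (r : V) : ℕ :=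
  sSup {m | ∃ f : Fin m → Set (V × V), (∀ i, IsSRTree D S r (f i)) ∧
    ∀ i j, i ≠ j → ArcDisj (f i) (f j)}

/-- The generalized `k`-vertex-strong connectivity `κ_k(D)`. -/
noncomputable def kappaK (D : Dgr V) (k : ℕ) : ℕ :=
  sInf {m | ∃ S : Set V, ∃ r ∈ S, S.ncard = k ∧ m = kappaSr D S r}

/-- The generalized `k`-arc-strong connectivity `λ_k(D)`. -/
noncomputable def lambdaK (D : Dgr V) (k : ℕ) : ℕ :=
  sInf {m | ∃ S : Set V, ∃ r ∈ S, S.ncard = k ∧ m = lambdaSr D S r}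

/-- A digraph is strong if every vertex can reach every other vertex. -/
def Strong (D : Dgr V) : Prop := ∀ u v, Relation.ReflTransGen D.Adj u v

/-- A digraph is minimally strong if it is strong but deleting any arc
destroys strongness. -/
def MinimallyStrong (D : Dgr V) : Prop :=
  Strong D ∧ ∀ e ∈ D.Arcs, ¬ Strong (D.deleteArc e)

/-- `D` is minimally generalized `(k, ℓ)`-vertex-strongly connected. -/
def MinVSC (D : Dgr V) (k ℓ : ℕ) : Prop :=
  ℓ ≤ kappaK D k ∧ ∀ e ∈ D.Arcs, kappaK (D.deleteArc e) k ≤ ℓ - 1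

/-- `D` is minimally generalized `(k, ℓ)`-arc-strongly connected. -/
def MinASC (D : Dgr V) (k ℓ : ℕ) : Prop :=
  ℓ ≤ lambdaK D k ∧ ∀ e ∈ D.Arcs, lambdaK (D.deleteArc e) k ≤ ℓ - 1

/-- The complete digraph `↔K_n` on `Fin n`. -/
def completeD (n : ℕ) : Dgr (Fin n) := ⟨fun u v => u ≠ v, fun _ h => h rfl⟩

/-- The arc set `M` induces a vertex-disjoint union of directed cycles
(2-cycles allowed) whose vertex set is exactly `W`: all arcs of `M` are
non-loops inside `W`, and every vertex of `W` has exactly one out-arc and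
exactly one in-arc in `M`. -/
def CycleFactorOn (M : Set (V × V)) (W : Set V) : Prop :=
  (∀ p ∈ M, p.1 ∈ W ∧ p.2 ∈ W ∧ p.1 ≠ p.2) ∧
  (∀ v ∈ W, ∃! u, (v, u) ∈ M) ∧
  (∀ v ∈ W, ∃! u, (u, v) ∈ M)

/-- The family `D_{n,1}`: digraphs obtained from `↔K_n` by deleting an arc
set `M` inducing a vertex-disjoint union of cycles covering all `n`
vertices. -/
def D1 (n : ℕ) : Set (Dgr (Fin n)) :=
  {D | ∃ M : Set (Fin n × Fin n), CycleFactorOn M Set.univ ∧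
    D = (completeD n).deleteArcs M}

/-- The family `D_{n,2}`: digraphs obtained from `↔K_n` by deleting an arc
set `M` inducing a vertex-disjoint union of cycles covering exactly `n - 1`
vertices. -/
def D2 (n : ℕ) : Set (Dgr (Fin n)) :=
  {D | ∃ M : Set (Fin n × Fin n), ∃ w : Fin n, CycleFactorOn M ({w}ᶜ) ∧
    D = (completeD n).deleteArcs M}

/-- `f(n,k,ℓ)`: minimum number of arcs of a minimally generalized
`(k,ℓ)`-vertex-strongly connected digraph of order `n`. -/
noncomputable def fMin (n k ℓ : ℕ) : ℕ :=
  sInf {m | ∃ D : Dgr (Fin n), MinVSC D k ℓ ∧ D.Arcs.ncard = m}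

/-- `g(n,k,ℓ)`: minimum number of arcs of a minimally generalized
`(k,ℓ)`-arc-strongly connected digraph of order `n`. -/
noncomputable def gMin (n k ℓ : ℕ) : ℕ :=
  sInf {m | ∃ D : Dgr (Fin n), MinASC D k ℓ ∧ D.Arcs.ncard = m}

/-- `F(n,k,ℓ)`: maximum number of arcs of a minimally generalized
`(k,ℓ)`-vertex-strongly connected digraph of order `n`. -/
noncomputable def FMax (n k ℓ : ℕ) : ℕ :=
  sSup {m | ∃ D : Dgr (Fin n), MinVSC D k ℓ ∧ D.Arcs.ncard = m}

/-- `G(n,k,ℓ)`: maximum number of arcs of a minimally generalized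
`(k,ℓ)`-arc-strongly connected digraph of order `n`. -/
noncomputable def GMax (n k ℓ : ℕ) : ℕ :=
  sSup {m | ∃ D : Dgr (Fin n), MinASC D k ℓ ∧ D.Arcs.ncard = m}

/-! ### Packing out-trees given by parent functions -/

/-- The arc set of the tree in which each `v ∈ X` has parent `p v`. -/
def parentArcs (X : Set V) (p : V → V) : Set (V × V) := {e | e.2 ∈ X ∧ e.1 = p e.2}

/-- A rank function `d` that drops along parents certifies that every vertex is reached from
the root. -/
lemma isOutTree_parentArcs {X : Set V} {p : V → V} {r : V} (d : V → ℕ) (hr : r ∉ X)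
    (hp : ∀ v ∈ X, p v = r ∨ (p v ∈ X ∧ d (p v) < d v)) :
    IsOutTree (parentArcs X p) r := by
  have hreach : ∀ m, ∀ v ∈ X, d v = m →
      Relation.ReflTransGen (fun a b => (a, b) ∈ parentArcs X p) r v := by
    intro m
    induction m using Nat.strong_induction_on with
    | _ m ih =>
      intro v hv hm
      have harc : (p v, v) ∈ parentArcs X p := ⟨hv, rfl⟩
      rcases hp v hv with h | ⟨h1, h2⟩
      · rw [h] at harc
        exact Relation.ReflTransGen.single harc
      · exact (ih _ (hm ▸ h2) _ h1 rfl).tail harc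
  have hav : ∀ v ∈ averts (parentArcs X p), v = r ∨ v ∈ X := by
    rintro v ⟨u, h | h⟩
    · exact Or.inr h.1
    · obtain ⟨h1, h2⟩ := h
      simp only at h1 h2
      rcases hp u h1 with h' | h'
      · exact Or.inl (h2.trans h')
      · exact Or.inr (h2 ▸ h'.1)
  refine ⟨fun v hv => ?_, fun e he h => hr (h ▸ he.1), fun v hv hvr => ?_⟩
  · rcases hav v hv with rfl | h
    · exact Relation.ReflTransGen.refl
    · exact hreach _ v h rfl
  · have hX := (hav v hv).resolve_left hvr
    exact ⟨p v, ⟨hX, rfl⟩, fun u hu => hu.2⟩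

lemma tverts_parentArcs {X : Set V} {p : V → V} {r : V}
    (hp : ∀ v ∈ X, p v = r ∨ p v ∈ X) :
    tverts (parentArcs X p) r = insert r X := by
  ext v
  constructor
  · rintro (⟨u, h | h⟩ | h)
    · exact Or.inr h.1
    · obtain ⟨h1, h2⟩ := h
      simp only at h1 h2
      rcases hp u h1 with h' | h'
      · exact Or.inl (h2.trans h')
      · exact Or.inr (h2 ▸ h')
    · exact Or.inl h
  · rintro (h | h)
    · exact Or.inr h
    · exact Or.inl ⟨p v, Or.inl ⟨h, rfl⟩⟩

/-- The set whose supremum defines `kappaSr` is bounded: an `(S,r)`-tree has an arc as soon as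
`S` has a vertex other than `r`, so disjoint trees have distinct representatives among the arcs. -/
lemma bddAbove_kappaSr [Finite V] (D : Dgr V) {S : Set V} {r s : V} (hs : s ∈ S) (hsr : s ≠ r) :
    BddAbove {m | ∃ f : Fin m → Set (V × V), (∀ i, IsSRTree D S r (f i)) ∧
      ∀ i j, i ≠ j → IntDisj S r (f i) (f j)} := by
  refine ⟨Nat.card (V × V), ?_⟩
  rintro m ⟨f, hf, hd⟩
  have hne : ∀ i, ∃ e, e ∈ f i := by
    intro i
    rcases (hf i).2.2 hs with ⟨u, h | h⟩ | h
    · exact ⟨_, h⟩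
    · exact ⟨_, h⟩
    · exact absurd h hsr
  choose e he using hne
  have hinj : Function.Injective e := by
    intro i j hij
    by_contra hne
    have h : e i ∈ f i ∩ f j := ⟨he i, hij ▸ he j⟩
    rw [show f i ∩ f j = ∅ from (hd i j hne).1] at h
    exact h
  simpa using Nat.card_le_card_of_injective e hinj

/-- Parent functions `p i` on vertex sets `X i` that meet only inside `S` give internally disjoint
trees once the `p i` send each vertex of `S` other than `r` to pairwise different parents. -/
lemma le_kappaSr [Finite V] (D : Dgr V) {S : Set V} {r s : V} (hrS : r ∈ S) (hs : s ∈ S)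
    (hsr : s ≠ r) {ℓ : ℕ} (X : Fin ℓ → Set V) (p : Fin ℓ → V → V) (d : Fin ℓ → V → ℕ)
    (hr : ∀ i, r ∉ X i) (hS : ∀ i, ∀ v ∈ S, v ≠ r → v ∈ X i)
    (hX : ∀ i j, i ≠ j → ∀ v, v ∈ X i → v ∈ X j → v ∈ S)
    (hadj : ∀ i, ∀ v ∈ X i, D.Adj (p i v) v)
    (hp : ∀ i, ∀ v ∈ X i, p i v = r ∨ (p i v ∈ X i ∧ d i (p i v) < d i v))
    (hdis : ∀ i j, i ≠ j → ∀ v ∈ S, v ≠ r → p i v ≠ p j v) :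
    ℓ ≤ kappaSr D S r := by
  have htv : ∀ i, tverts (parentArcs (X i) (p i)) r = insert r (X i) := fun i =>
    tverts_parentArcs fun v hv => (hp i v hv).imp id And.left
  refine le_csSup (bddAbove_kappaSr D hs hsr) ⟨fun i => parentArcs (X i) (p i), fun i => ?_, ?_⟩
  · refine ⟨?_, isOutTree_parentArcs (d i) (hr i) (hp i), ?_⟩
    · rintro ⟨u, v⟩ ⟨h1, h2⟩
      simp only at h1 h2
      subst h2
      exact hadj i v h1
    · intro v hv
      rw [htv]
      by_cases h : v = r
      · exact Or.inl h
      · exact Or.inr (hS i v hv h)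
  · intro i j hij
    refine ⟨?_, ?_⟩
    · refine Set.eq_empty_iff_forall_notMem.mpr ?_
      rintro ⟨u, v⟩ ⟨⟨h1, h2⟩, ⟨h3, h4⟩⟩
      simp only at h1 h2 h3 h4
      exact hdis i j hij v (hX i j hij v h1 h3) (fun h => hr i (h ▸ h1)) (h2.symm.trans h4)
    · rw [htv, htv]
      ext v
      constructor
      · rintro ⟨h | h, h' | h'⟩
        · exact h ▸ hrS
        · exact h ▸ hrS
        · exact h' ▸ hrS
        · exact hX i j hij v h h'
      · intro hv
        by_cases h : v = r
        · exact ⟨Or.inl h, Or.inl h⟩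
        · exact ⟨Or.inr (hS i v hv h), Or.inr (hS j v hv h)⟩

/-! ### Hub digraphs -/

/-- The trees of the construction, one for each hub `i < ℓ`. The tree of hub `i` uses besides `S`
only `i` itself and a private vertex `b i`, which is either a non-hub or, when `i` is joined in
both directions to all other vertices, `i` itself. The vertex `b i` (if `r` is a hub) or `i`
(if not) has parent `r`; of the other vertices apart from `r`, non-hubs have parent `i` and hubs
have parent `b i`. -/
lemma le_kappaSr_of_hubs {n ℓ : ℕ} (hℓ : ℓ ≤ n) (D : Dgr (Fin n)) {S : Set (Fin n)}
    {r s : Fin n} (hrS : r ∈ S) (hs : s ∈ S) (hsr : s ≠ r)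
    (hbip : ∀ u v : Fin n, ¬ (u.val < ℓ ↔ v.val < ℓ) → D.Adj u v)
    (b : Fin ℓ → Fin n) (hinj : Function.Injective b) (hbS : ∀ i, b i ∉ S)
    (hb : ∀ i, ℓ ≤ (b i).val ∨ (b i = Fin.castLE hℓ i ∧
      ∀ v, v ≠ b i → D.Adj v (b i) ∧ D.Adj (b i) v)) :
    ℓ ≤ kappaSr D S r := by
  classical
  set h : Fin ℓ → Fin n := Fin.castLE hℓ with hh
  have hlt : ∀ i, (h i).val < ℓ := fun i => i.2
  have hhinj : ∀ i j, h i = h j → i = j := fun i j e => Fin.castLE_injective hℓ e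
  have hbj : ∀ i j, b i = b j → i = j := fun i j e => hinj e
  have hhb : ∀ i j, h i = b j → i = j := by
    intro i j e
    rcases hb j with h1 | h1
    · have := hlt i
      rw [e] at this
      omega
    · exact hhinj _ _ (e.trans h1.1)
  have hrb : ∀ i, r ≠ b i := fun i e => hbS i (e ▸ hrS)
  set X : Fin ℓ → Set (Fin n) := fun i => {v | (v ∈ S ∨ v = h i ∨ v = b i) ∧ v ≠ r} with hXdef
  have hr : ∀ i, r ∉ X i := fun i hi => hi.2 rfl
  have hS : ∀ i, ∀ v ∈ S, v ≠ r → v ∈ X i := fun i v hv hvr => ⟨Or.inl hv, hvr⟩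
  have hX : ∀ i j, i ≠ j → ∀ v, v ∈ X i → v ∈ X j → v ∈ S := by
    rintro i j hij v ⟨h1 | h1 | h1, -⟩ ⟨h2 | h2 | h2, -⟩
    · exact h1
    · exact h1
    · exact h1
    · exact h2
    · exact absurd (hhinj _ _ (h1.symm.trans h2)) hij
    · exact absurd (hhb _ _ (h1.symm.trans h2)) hij
    · exact h2
    · exact absurd (hhb _ _ (h2.symm.trans h1)).symm hij
    · exact absurd (hbj _ _ (h1.symm.trans h2)) hij
  by_cases hrA : r.val < ℓ
  · refine le_kappaSr D hrS hs hsr X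
      (fun i v => if v = b i then r else if v.val < ℓ then b i else h i)
      (fun i v => if v = b i then 0 else if v.val < ℓ then 1 else 2) hr hS hX ?_ ?_ ?_
    · rintro i v ⟨hv, hvr⟩
      split_ifs with h1 h2
      · subst h1
        rcases hb i with h3 | h3
        · exact hbip _ _ (by omega)
        · exact (h3.2 r (hrb i)).1
      · rcases hb i with h3 | h3
        · exact hbip _ _ (by omega)
        · exact (h3.2 v h1).2
      · exact hbip _ _ (by have := hlt i; omega)
    · rintro i v ⟨hv, hvr⟩
      by_cases h1 : v = b i
      · simp [h1]
      · by_cases h2 : v.val < ℓ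
        · right
          simp only [h1, h2, if_true, if_false]
          exact ⟨⟨Or.inr (Or.inr rfl), (hrb i).symm⟩, by simp⟩
        · simp only [h1, h2, if_false]
          by_cases h3 : h i = r
          · exact Or.inl h3
          · refine Or.inr ⟨⟨Or.inr (Or.inl rfl), h3⟩, ?_⟩
            rw [if_pos (hlt i)]
            split_ifs <;> omega
    · intro i j hij v hv hvr
      rw [if_neg (fun e : v = b i => hbS i (e ▸ hv)), if_neg (fun e : v = b j => hbS j (e ▸ hv))]
      split_ifs
      · exact fun e => hij (hbj _ _ e)
      · exact fun e => hij (hhinj _ _ e)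
  · have hrh : ∀ i, h i ≠ r := fun i e => hrA (e ▸ hlt i)
    refine le_kappaSr D hrS hs hsr X
      (fun i v => if v = h i then r else if v.val < ℓ then b i else h i)
      (fun i v => if v = h i then 0 else if v.val < ℓ then 2 else 1) hr hS hX ?_ ?_ ?_
    · rintro i v ⟨hv, hvr⟩
      split_ifs with h1 h2
      · subst h1
        exact hbip _ _ (by have := hlt i; omega)
      · rcases hb i with h3 | h3
        · exact hbip _ _ (by omega)
        · exact (h3.2 v (fun e => h1 (e.trans h3.1))).2
      · exact hbip _ _ (by have := hlt i; omega)
    · rintro i v ⟨hv, hvr⟩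
      by_cases h1 : v = h i
      · simp [h1]
      · by_cases h2 : v.val < ℓ
        · right
          simp only [h1, h2, if_true, if_false]
          refine ⟨⟨Or.inr (Or.inr rfl), (hrb i).symm⟩, ?_⟩
          rcases hb i with h3 | h3
          · rw [if_neg (fun e => by have := hlt i; rw [e] at h3; omega), if_neg (by omega)]
            omega
          · rw [if_pos h3.1]
            omega
        · right
          simp only [h1, h2, if_false]
          exact ⟨⟨Or.inr (Or.inl rfl), hrh i⟩, by simp⟩
    · intro i j hij v hv hvr
      split_ifs with h1 h2 h3 h4 h5
      · exact absurd (hhinj _ _ (h1.symm.trans h2)) hij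
      · exact hrb j
      · exact (hrh j).symm
      · exact (hrb i).symm
      · exact fun e => hij (hbj _ _ e)
      · exact hrh i
      · exact fun e => hij (hhinj _ _ e)

/-- Private vertices for the hubs: those in `I` get distinct non-hubs outside `S`, the others
are their own private vertex. -/
lemma exists_private {n ℓ : ℕ} (hℓ : ℓ ≤ n) (S : Finset (Fin n)) (I : Finset (Fin ℓ))
    (hI : I.card ≤ (Finset.univ.filter fun v : Fin n => ℓ ≤ v.val ∧ v ∉ S).card)
    (hIS : ∀ i ∉ I, Fin.castLE hℓ i ∉ S) :
    ∃ b : Fin ℓ → Fin n, Function.Injective b ∧ (∀ i, b i ∉ S) ∧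
      (∀ i ∈ I, ℓ ≤ (b i).val) ∧ ∀ i ∉ I, b i = Fin.castLE hℓ i := by
  classical
  obtain ⟨e⟩ : Nonempty (I ↪ (Finset.univ.filter fun v : Fin n => ℓ ≤ v.val ∧ v ∉ S)) :=
    Function.Embedding.nonempty_of_card_le (by simpa only [Fintype.card_coe] using hI)
  have he : ∀ x, ℓ ≤ (e x).1.val ∧ (e x).1 ∉ S := fun x => (Finset.mem_filter.mp (e x).2).2
  refine ⟨fun i => if hi : i ∈ I then (e ⟨i, hi⟩).1 else Fin.castLE hℓ i, ?_, ?_, ?_, ?_⟩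
  · intro i j hij
    dsimp only at hij
    split_ifs at hij with h1 h2 h2
    · simpa using e.injective (Subtype.ext hij)
    · have := (he ⟨i, h1⟩).1
      rw [hij] at this
      exact absurd j.2 (not_lt.mpr this)
    · have := (he ⟨j, h2⟩).1
      rw [← hij] at this
      exact absurd i.2 (not_lt.mpr this)
    · exact Fin.castLE_injective hℓ hij
  · intro i
    dsimp only
    split_ifs with h1
    · exact (he _).2
    · exact hIS i h1
  · intro i hi
    simp only [hi, dif_pos]
    exact (he _).1
  · intro i hi
    simp [hi]

lemma card_hubs {n ℓ : ℕ} (hℓ : ℓ ≤ n) :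
    (Finset.univ.filter fun v : Fin n => v.val < ℓ).card = ℓ := by
  rw [Fin.card_filter_val_lt]
  exact min_eq_right hℓ

lemma card_nonhubs {n ℓ : ℕ} (hℓ : ℓ ≤ n) :
    (Finset.univ.filter fun v : Fin n => ℓ ≤ v.val).card = n - ℓ := by
  have h := Finset.card_filter_add_card_filter_not (s := (Finset.univ : Finset (Fin n)))
    (fun v => v.val < ℓ)
  rw [card_hubs hℓ, Finset.card_univ, Fintype.card_fin] at h
  simp only [not_lt] at h
  omega

/-- The number of non-hubs outside `S`, in terms of the number of hubs inside `S`. -/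
lemma card_free {n ℓ : ℕ} (hℓ : ℓ ≤ n) (S : Finset (Fin n)) :
    (Finset.univ.filter fun v : Fin n => ℓ ≤ v.val ∧ v ∉ S).card + S.card =
      n - ℓ + (S.filter fun v => v.val < ℓ).card := by
  classical
  have h1 := Finset.card_filter_add_card_filter_not (s := S) (fun v => v.val < ℓ)
  have h2 := Finset.card_filter_add_card_filter_not
    (s := Finset.univ.filter fun v : Fin n => ℓ ≤ v.val) (fun v => v ∉ S)
  rw [card_nonhubs hℓ, Finset.filter_filter, Finset.filter_filter] at h2
  have h3 : (Finset.univ.filter fun v : Fin n => ℓ ≤ v.val ∧ ¬ v ∉ S) =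
      S.filter fun v => ¬ v.val < ℓ := by
    ext v
    simp [and_comm]
  rw [h3] at h2
  omega

/-! ### Reduction to a digraph that need not be minimal -/

/-- A digraph with `κ_k ≥ ℓ` and the fewest arcs is minimally generalized
`(k,ℓ)`-vertex-strongly connected, so any digraph with `κ_k ≥ ℓ` bounds `fMin`. -/
lemma fMin_le {n k ℓ : ℕ} (D : Dgr (Fin n)) (hD : ℓ ≤ kappaK D k) :
    fMin n k ℓ ≤ D.Arcs.ncard := by
  classical
  have hex : ∃ m, ∃ D : Dgr (Fin n), ℓ ≤ kappaK D k ∧ D.Arcs.ncard = m := ⟨_, D, hD, rfl⟩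
  obtain ⟨E, hE, hEm⟩ := Nat.find_spec hex
  have hmin : ∀ D' : Dgr (Fin n), ℓ ≤ kappaK D' k → E.Arcs.ncard ≤ D'.Arcs.ncard :=
    fun D' h => hEm ▸ Nat.find_min' hex ⟨D', h, rfl⟩
  refine le_trans (Nat.sInf_le ⟨E, ⟨hE, fun e he => ?_⟩, rfl⟩) (hmin D hD)
  by_contra hcon
  have hlt : (E.deleteArc e).Arcs.ncard < E.Arcs.ncard :=
    Set.ncard_lt_ncard ⟨fun p hp => hp.1, fun h => (h he).2 rfl⟩ (Set.toFinite _)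
  exact absurd (hmin (E.deleteArc e) (by omega)) (not_le.mpr hlt)

/-- It suffices to bound `kappaSr` over finsets `S`; the value of `kappaK` is not a junk value
because `k ≤ n` provides a set of size `k`. -/
lemma le_kappaK {n k ℓ : ℕ} (hk : 2 ≤ k) (hkn : k ≤ n) (D : Dgr (Fin n))
    (h : ∀ S : Finset (Fin n), S.card = k → ∀ r ∈ S, ∀ s ∈ S, s ≠ r →
      ℓ ≤ kappaSr D (S : Set (Fin n)) r) :
    ℓ ≤ kappaK D k := by
  classical
  refine le_csInf ?_ ?_
  · obtain ⟨S, -, hS⟩ := Finset.exists_subset_card_eq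
      (s := (Finset.univ : Finset (Fin n))) (n := k) (by simpa using hkn)
    obtain ⟨r, hr⟩ : S.Nonempty := Finset.card_pos.mp (by omega)
    exact ⟨_, S, r, hr, by rw [Set.ncard_coe_finset, hS], rfl⟩
  · rintro m ⟨S, r, hr, hS, rfl⟩
    have hST : ((S.toFinite.toFinset : Finset (Fin n)) : Set (Fin n)) = S :=
      S.toFinite.coe_toFinset
    generalize S.toFinite.toFinset = T at hST
    subst hST
    rw [Set.ncard_coe_finset] at hS
    obtain ⟨s, hs, hsr⟩ := Finset.exists_mem_ne (by omega : 1 < T.card) r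
    exact h T hS r hr s hs hsr

/-- The hubs `v < ℓ` are joined in both directions to all other vertices, hubs included. -/
def hubDgr (n ℓ : ℕ) : Dgr (Fin n) :=
  ⟨fun u v => u ≠ v ∧ (u.val < ℓ ∨ v.val < ℓ), fun _ h => h.1 rfl⟩

/-- The complete bipartite digraph between the hubs `v < ℓ` and the remaining vertices. -/
def bipDgr (n ℓ : ℕ) : Dgr (Fin n) :=
  ⟨fun u v => ¬ (u.val < ℓ ↔ v.val < ℓ), fun _ h => h Iff.rfl⟩

lemma ncard_bipDgr_le {n ℓ : ℕ} (hℓ : ℓ ≤ n) :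
    (bipDgr n ℓ).Arcs.ncard ≤ 2 * ℓ * (n - ℓ) := by
  classical
  set A := Finset.univ.filter fun v : Fin n => v.val < ℓ with hA
  set B := Finset.univ.filter fun v : Fin n => ℓ ≤ v.val with hB
  have hsub : (bipDgr n ℓ).Arcs ⊆ ((A ×ˢ B ∪ B ×ˢ A : Finset (Fin n × Fin n)) : Set _) := by
    rintro ⟨u, v⟩ huv
    have h : ¬ (u.val < ℓ ↔ v.val < ℓ) := huv
    simp only [hA, hB, Finset.coe_union, Set.mem_union, Finset.mem_coe, Finset.mem_product,
      Finset.mem_filter, Finset.mem_univ, true_and]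
    omega
  refine (Set.ncard_le_ncard hsub (Finset.finite_toSet _)).trans ?_
  rw [Set.ncard_coe_finset]
  refine (Finset.card_union_le _ _).trans ?_
  rw [Finset.card_product, Finset.card_product, hA, hB, card_hubs hℓ, card_nonhubs hℓ]
  exact le_of_eq (by ring)

lemma ncard_hubDgr_le {n ℓ : ℕ} (hℓ : ℓ ≤ n) :
    (hubDgr n ℓ).Arcs.ncard ≤ ℓ * (ℓ - 1) + 2 * ℓ * (n - ℓ) := by
  classical
  set A := Finset.univ.filter fun v : Fin n => v.val < ℓ with hA
  have hsub : (hubDgr n ℓ).Arcs ⊆ (A.offDiag : Set (Fin n × Fin n)) ∪ (bipDgr n ℓ).Arcs := by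
    rintro ⟨u, v⟩ ⟨hne, h⟩
    simp only at hne h
    by_cases hc : u.val < ℓ ↔ v.val < ℓ
    · refine Or.inl ?_
      simp only [hA, Finset.mem_coe, Finset.mem_offDiag, Finset.mem_filter, Finset.mem_univ,
        true_and]
      exact ⟨by omega, by omega, hne⟩
    · exact Or.inr hc
  refine (Set.ncard_le_ncard hsub (Set.toFinite _)).trans ((Set.ncard_union_le _ _).trans ?_)
  refine Nat.add_le_add ?_ (ncard_bipDgr_le hℓ)
  rw [Set.ncard_coe_finset, Finset.offDiag_card, hA, card_hubs hℓ, Nat.mul_sub_one]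

lemma le_kappaK_hubDgr {n k ℓ : ℕ} (hk : 2 ≤ k) (hn : k + ℓ ≤ n) :
    ℓ ≤ kappaK (hubDgr n ℓ) k := by
  classical
  have hℓ : ℓ ≤ n := by omega
  refine le_kappaK hk (by omega) _ fun S hS r hr s hs hsr => ?_
  -- Only the hubs in `S` need a non-hub; there are enough of them since `n - ℓ ≥ k`.
  set I := Finset.univ.filter fun i : Fin ℓ => Fin.castLE hℓ i ∈ S with hI
  have hcard : I.card ≤ (S.filter fun v => v.val < ℓ).card := by
    refine Finset.card_le_card_of_injOn (Fin.castLE hℓ) (fun i hi => ?_)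
      (Fin.castLE_injective hℓ).injOn
    simp only [hI, Finset.coe_filter, Finset.mem_univ, true_and, Set.mem_ofPred_eq] at hi ⊢
    exact ⟨hi, i.2⟩
  have hfree := card_free hℓ S
  obtain ⟨b, hinj, hbS, hbI, hbn⟩ := exists_private hℓ S I (by omega)
    (fun i hi => by simpa [hI] using hi)
  refine le_kappaSr_of_hubs hℓ _ (S := (S : Set (Fin n))) hr hs hsr ?_ b hinj hbS ?_
  · intro u v huv
    exact ⟨fun e => huv (e ▸ Iff.rfl), by omega⟩
  · intro i
    by_cases hi : i ∈ I
    · exact Or.inl (hbI i hi)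
    · have hlt : (b i).val < ℓ := by
        rw [hbn i hi]
        exact i.2
      exact Or.inr ⟨hbn i hi, fun v hv => ⟨⟨hv, Or.inr hlt⟩, ⟨hv.symm, Or.inl hlt⟩⟩⟩

lemma le_kappaK_bipDgr {n k ℓ : ℕ} (hk : 2 ≤ k) (hn : k + 2 * ℓ ≤ n) :
    ℓ ≤ kappaK (bipDgr n ℓ) k := by
  classical
  have hℓ : ℓ ≤ n := by omega
  refine le_kappaK hk (by omega) _ fun S hS r hr s hs hsr => ?_
  have hfree := card_free hℓ S
  obtain ⟨b, hinj, hbS, hbI, -⟩ := exists_private hℓ S Finset.univ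
    (by rw [Finset.card_univ, Fintype.card_fin]; omega)
    (fun i hi => absurd (Finset.mem_univ i) hi)
  exact le_kappaSr_of_hubs hℓ _ (S := (S : Set (Fin n))) hr hs hsr (fun _ _ h => h) b hinj hbS
    (fun i => Or.inl (hbI i (Finset.mem_univ i)))

/-- if `n ≥ k + ℓ` then `f(n,k,ℓ) ≤ a(ℓ) + 2ℓ(n-ℓ)` where
`a(ℓ) = ℓ(ℓ-1)` (which is `0` for `ℓ = 1`); in particular if
`n ≥ k + 2ℓ` then `f(n,k,ℓ) ≤ 2ℓ(n-ℓ)`. -/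
theorem stmt_13 (n k ℓ : ℕ) (hk : 2 ≤ k) (hkn : k ≤ n) (hl : 1 ≤ ℓ)
    (hln : ℓ ≤ n - 1) :
    (k + ℓ ≤ n → fMin n k ℓ ≤ ℓ * (ℓ - 1) + 2 * ℓ * (n - ℓ)) ∧
    (k + 2 * ℓ ≤ n → fMin n k ℓ ≤ 2 * ℓ * (n - ℓ)) := by
  have hℓ : ℓ ≤ n := by omega
  exact ⟨fun hn => (fMin_le _ (le_kappaK_hubDgr hk hn)).trans (ncard_hubDgr_le hℓ),
    fun hn => (fMin_le _ (le_kappaK_bipDgr hk hn)).trans (ncard_bipDgr_le hℓ)⟩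

end TreeConn
end

section
/- For all integers n, k, ℓ with 2 ≤ k ≤ n and 1 ≤ ℓ ≤ n−1, g(n,k,ℓ) = nℓ. -/
/-!
A digraph with `λ_k ≥ ℓ` has all in-degrees at least `ℓ`: any vertex `v` lies in some `k`-set `S`
with a root `r ≠ v`, and each of `ℓ` arc-disjoint `(S,r)`-trees uses its own arc into `v`
(`card_le_indeg`). Summing over `v` gives at least `nℓ` arcs (`le_arcs`).

Equality holds for the circulant digraph on `ℤ/n` with steps `1, …, ℓ` (`circ`), which has `nℓ`
arcs. It suffices to find, for every root, `ℓ` arc-disjoint spanning out-trees; by translation the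
root is `0`. In the `j`-th tree (`1 ≤ j ≤ ℓ`) the vertex `j` is a child of `0`. Each `x > j` is a
child of the largest `y < x` with `y ≥ j` and `y ≡ j` mod `ℓ`, and each `0 < x < j` is a child of
`n - 1 - ℓ + j`, which is at least `j`, through an arc that wraps around `0`. For fixed `x`,
different trees use different parents (`par_inj`), hence the trees are arc-disjoint.

Minimality is automatic: deleting an arc leaves fewer than `nℓ` arcs, so `λ_k < ℓ` by the bound.
-/

/-!
Formalization of directed tree connectivity (Sun, "Extremal results for
directed tree connectivity").

A digraph (no loops, no parallel arcs) on a vertex type `V` is given by an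
irreflexive adjacency relation.  Out-trees, `(S,r)`-trees, the parameters
`κ_k`, `λ_k`, minimally generalized `(k,ℓ)`-vertex/arc-strongly connected
digraphs, the families `D_{n,1}`, `D_{n,2}` and the extremal functions
`f, g, F, G` are defined below.
-/

namespace TreeConn

variable {V : Type}

/-! ### The in-degree bound -/

/-- Every `(S,r)`-tree has an arc entering each non-root vertex `v` of `S`, so pairwise
arc-disjoint trees inject into the in-neighbours of `v`. -/
lemma card_le_indeg {n m : ℕ} {D : Dgr (Fin n)} {S : Set (Fin n)} {r v : Fin n}
    (hv : v ∈ S) (hvr : v ≠ r) (f : Fin m → Set (Fin n × Fin n))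
    (hf : ∀ i, IsSRTree D S r (f i)) (hd : ∀ i j, i ≠ j → ArcDisj (f i) (f j)) :
    m ≤ {u | D.Adj u v}.ncard := by
  have key : ∀ i, ∃ u, (u, v) ∈ f i := by
    intro i
    obtain ⟨-, ⟨-, -, h⟩, hS⟩ := hf i
    rcases hS hv with h1 | h1
    · exact (h v h1 hvr).exists
    · exact absurd h1 hvr
  choose g hg using key
  have hinj : Function.Injective g := by
    intro i j hij
    by_contra hne
    have : (g i, v) ∈ f i ∩ f j := ⟨hg i, by rw [hij]; exact hg j⟩
    rw [hd i j hne] at this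
    exact this
  have hsub : Set.range g ⊆ {u | D.Adj u v} := by
    rintro _ ⟨i, rfl⟩
    exact (hf i).1 (hg i)
  calc m = (Set.range g).ncard := by
        rw [← Set.image_univ, Set.ncard_image_of_injective _ hinj]
        simp
    _ ≤ _ := Set.ncard_le_ncard hsub (Set.toFinite _)

lemma exists_set {n k : ℕ} (hk : 2 ≤ k) (hkn : k ≤ n) (v : Fin n) :
    ∃ S : Set (Fin n), v ∈ S ∧ (∃ r ∈ S, v ≠ r) ∧ S.ncard = k := by
  obtain ⟨T, hT, -, hTc⟩ := Finset.exists_subsuperset_card_eq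
    (Finset.subset_univ ({v} : Finset (Fin n))) (n := k) (by simp; omega) (by simpa using hkn)
  obtain ⟨r, hr, hrv⟩ := Finset.exists_mem_ne (s := T) (by omega) v
  exact ⟨T, by simpa using hT, ⟨r, by simpa using hr, hrv.symm⟩, by simpa using hTc⟩

lemma le_indeg {n k ℓ : ℕ} (hk : 2 ≤ k) (hkn : k ≤ n) {D : Dgr (Fin n)}
    (h : ℓ ≤ lambdaK D k) (v : Fin n) : ℓ ≤ {u | D.Adj u v}.ncard := by
  obtain ⟨S, hv, ⟨r, hr, hvr⟩, hc⟩ := exists_set hk hkn v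
  have h1 : lambdaK D k ≤ lambdaSr D S r := Nat.sInf_le ⟨S, r, hr, hc, rfl⟩
  have h2 : lambdaSr D S r ≤ {u | D.Adj u v}.ncard := by
    refine csSup_le ⟨0, fun i => i.elim0, fun i => i.elim0, fun i => i.elim0⟩ ?_
    rintro m ⟨f, hf, hd⟩
    exact card_le_indeg hv hvr f hf hd
  omega

lemma arcs_eq_sum {n : ℕ} (D : Dgr (Fin n)) :
    D.Arcs.ncard = ∑ v, {u | D.Adj u v}.ncard := by
  classical
  have h1 : D.Arcs.ncard = (Finset.univ.filter fun p : Fin n × Fin n => D.Adj p.1 p.2).card := by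
    rw [← Set.ncard_coe_finset]
    congr 1
    ext p
    simp [Dgr.Arcs]
  rw [h1, Finset.card_eq_sum_card_fiberwise (f := Prod.snd) (t := Finset.univ) (by simp)]
  refine Finset.sum_congr rfl fun v _ => ?_
  rw [← Set.ncard_coe_finset,
    ← Set.ncard_image_of_injective {u | D.Adj u v} (Prod.mk_left_injective v)]
  congr 1
  ext ⟨a, b⟩
  simp only [Finset.coe_filter, Finset.mem_filter, Finset.mem_univ, true_and, Set.mem_ofPred_eq,
    Set.mem_image, Prod.mk.injEq]
  constructor
  · rintro ⟨h, rfl⟩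
    exact ⟨a, h, rfl, rfl⟩
  · rintro ⟨_, h, rfl, rfl⟩
    exact ⟨h, rfl⟩

lemma le_arcs {n k ℓ : ℕ} (hk : 2 ≤ k) (hkn : k ≤ n) {D : Dgr (Fin n)}
    (h : ℓ ≤ lambdaK D k) : n * ℓ ≤ D.Arcs.ncard := by
  rw [arcs_eq_sum]
  calc n * ℓ = ∑ _v : Fin n, ℓ := by simp
    _ ≤ _ := Finset.sum_le_sum fun v _ => le_indeg hk hkn h v

/-! ### Branchings of the circulant digraph -/

/-- The circulant digraph on `ℤ/(m+1)` with steps `1, …, ℓ`. -/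
def circ (m ℓ : ℕ) : Dgr (Fin (m + 1)) :=
  ⟨fun u v => 1 ≤ (v - u).val ∧ (v - u).val ≤ ℓ, fun v h => by simp at h⟩

/-- The parent of `x ≠ 0` in the `j`-th out-branching (`1 ≤ j ≤ ℓ`) of `circ m ℓ` rooted at `0`. -/
def par (m ℓ j x : ℕ) : ℕ :=
  if x < j then m - ℓ + j else if x = j then 0 else j + ℓ * ((x - j - 1) / ℓ)

/-- A quantity that strictly decreases from `x ≠ 0` to its parent `par m ℓ j x`. -/
def rk (m j x : ℕ) : ℕ := if x = 0 then 0 else if x < j then m + 1 else x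

lemma par_gt {m ℓ j x : ℕ} (hl : 1 ≤ ℓ) (h : j < x) :
    ∃ q, par m ℓ j x = j + ℓ * q ∧ j + ℓ * q < x ∧ x ≤ j + ℓ * q + ℓ := by
  refine ⟨(x - j - 1) / ℓ, by simp [par, show ¬ x < j by omega, show x ≠ j by omega], ?_⟩
  have h1 := Nat.div_add_mod (x - j - 1) ℓ
  have h2 := Nat.mod_lt (x - j - 1) hl
  omega

lemma par_lt {m ℓ j x : ℕ} (h : x < j) : par m ℓ j x = m - ℓ + j := by simp [par, h]

lemma par_self (m ℓ j : ℕ) : par m ℓ j j = 0 := by simp [par]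

lemma par_le {m ℓ j x : ℕ} (hl : 1 ≤ ℓ) (hlm : ℓ ≤ m) (hj : j ≤ ℓ) (hx : x ≤ m) :
    par m ℓ j x ≤ m := by
  rcases lt_trichotomy x j with h | rfl | h
  · rw [par_lt h]; omega
  · rw [par_self]; omega
  · obtain ⟨q, h1, h2, h3⟩ := par_gt (m := m) hl h
    omega

lemma rk_par {m ℓ j x : ℕ} (hl : 1 ≤ ℓ) (hlm : ℓ ≤ m) (hj1 : 1 ≤ j) (hj : j ≤ ℓ) (hx0 : x ≠ 0) :
    rk m j (par m ℓ j x) < rk m j x := by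
  rcases lt_trichotomy x j with h | rfl | h
  · rw [par_lt h]; unfold rk; split_ifs <;> omega
  · rw [par_self]; unfold rk; split_ifs <;> omega
  · obtain ⟨q, h1, h2, h3⟩ := par_gt (m := m) hl h
    rw [h1]; unfold rk; split_ifs <;> omega

/-- Distinct trees give `x` distinct parents; this is what makes them arc-disjoint. -/
lemma par_inj {m ℓ i j x : ℕ} (hl : 1 ≤ ℓ) (hi1 : 1 ≤ i) (hi : i ≤ ℓ)
    (hj1 : 1 ≤ j) (hj : j ≤ ℓ) (h : par m ℓ i x = par m ℓ j x) : i = j := by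
  rcases lt_trichotomy x i with hxi | hxi | hxi <;> rcases lt_trichotomy x j with hxj | hxj | hxj
  · rw [par_lt hxi, par_lt hxj] at h; omega
  · subst hxj; rw [par_lt hxi, par_self] at h; omega
  · obtain ⟨q, h1, h2, h3⟩ := par_gt (m := m) hl hxj
    rw [par_lt hxi, h1] at h; omega
  · subst hxi; rw [par_lt hxj, par_self] at h; omega
  · omega
  · obtain ⟨q, h1, h2, h3⟩ := par_gt (m := m) hl hxj
    subst hxi; rw [par_self] at h; omega
  · obtain ⟨q, h1, h2, h3⟩ := par_gt (m := m) hl hxi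
    rw [par_lt hxj, h1] at h; omega
  · obtain ⟨q, h1, h2, h3⟩ := par_gt (m := m) hl hxi
    subst hxj; rw [par_self] at h; omega
  · obtain ⟨q, h1, h2, h3⟩ := par_gt (m := m) hl hxi
    obtain ⟨q', h1', h2', h3'⟩ := par_gt (m := m) hl hxj
    -- Both parents lie in `[x - ℓ, x - 1]`, and they are congruent to `i` and `j` mod `ℓ`.
    rw [h1, h1'] at h
    rcases lt_trichotomy q q' with hq | rfl | hq
    · have := Nat.mul_le_mul_left ℓ (show q + 1 ≤ q' from hq)
      rw [mul_add] at this; omega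
    · omega
    · have := Nat.mul_le_mul_left ℓ (show q' + 1 ≤ q from hq)
      rw [mul_add] at this; omega

/-- A parent map along which some rank decreases defines a spanning out-tree. -/
lemma isOutTree_of_parent {V : Type} (P : V → V) (r : V) (ρ : V → ℕ)
    (hρ : ∀ v, v ≠ r → ρ (P v) < ρ v) :
    IsOutTree {e : V × V | e.2 ≠ r ∧ e.1 = P e.2} r := by
  refine ⟨fun v _ => ?_, fun p hp => hp.1, fun v _ hv => ⟨P v, ⟨hv, rfl⟩, fun u hu => hu.2⟩⟩
  induction hn : ρ v using Nat.strong_induction_on generalizing v with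
  | _ n ih =>
    by_cases hv : v = r
    · rw [hv]
    · exact (ih _ (hn ▸ hρ v hv) _ ⟨v, Or.inr ⟨hv, rfl⟩⟩ rfl).tail ⟨hv, rfl⟩

/-- The parent of `v` in the `j`-th out-branching of `circ m ℓ` rooted at `r`: the translate
by `r` of the one rooted at `0`. -/
def parR (m ℓ : ℕ) (r : Fin (m + 1)) (j : ℕ) (v : Fin (m + 1)) : Fin (m + 1) :=
  r + Fin.ofNat (m + 1) (par m ℓ j (v - r).val)

lemma parR_sub {m ℓ j : ℕ} (hl : 1 ≤ ℓ) (hlm : ℓ ≤ m) (hj : j ≤ ℓ) (r v : Fin (m + 1)) :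
    (parR m ℓ r j v - r).val = par m ℓ j (v - r).val := by
  have := par_le (x := (v - r).val) hl hlm hj (by omega)
  rw [parR, add_sub_cancel_left]
  simp only [Fin.ofNat]
  exact Nat.mod_eq_of_lt (by omega)

lemma circ_adj_parR {m ℓ j : ℕ} (hl : 1 ≤ ℓ) (hlm : ℓ ≤ m) (hj1 : 1 ≤ j) (hj : j ≤ ℓ)
    {r v : Fin (m + 1)} (hv : v ≠ r) : (circ m ℓ).Adj (parR m ℓ r j v) v := by
  have hx0 : (v - r).val ≠ 0 := by
    intro h
    exact hv (sub_eq_zero.1 (Fin.ext h))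
  have hc := parR_sub hl hlm hj r v
  have hs : v - parR m ℓ r j v = (v - r) - (parR m ℓ r j v - r) := by abel
  have hx := (v - r).isLt
  change 1 ≤ (v - parR m ℓ r j v).val ∧ (v - parR m ℓ r j v).val ≤ ℓ
  rw [hs]
  generalize v - r = x at *
  generalize parR m ℓ r j v - r = c at *
  rcases lt_trichotomy x.val j with h | h | h
  · rw [par_lt h] at hc
    have : x < c := by rw [Fin.lt_def]; omega
    rw [Fin.coe_sub_iff_lt.2 this]
    omega
  · rw [h, par_self] at hc
    have : c ≤ x := by rw [Fin.le_def]; omega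
    rw [Fin.coe_sub_iff_le.2 this]
    omega
  · obtain ⟨q, h1, h2, h3⟩ := par_gt (m := m) hl h
    have : c ≤ x := by rw [Fin.le_def]; omega
    rw [Fin.coe_sub_iff_le.2 this]
    omega

lemma le_lambdaK_circ {m k ℓ : ℕ} (hk : 2 ≤ k) (hkn : k ≤ m + 1) (hl : 1 ≤ ℓ) (hlm : ℓ ≤ m) :
    ℓ ≤ lambdaK (circ m ℓ) k := by
  refine le_csInf ?_ ?_
  · obtain ⟨S, -, ⟨r, hr, -⟩, hc⟩ := exists_set hk hkn 0
    exact ⟨_, S, r, hr, hc, rfl⟩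
  rintro _ ⟨S, r, hr, hc, rfl⟩
  obtain ⟨v, hv, hvr⟩ := Set.exists_ne_of_one_lt_ncard (s := S) (by omega) r
  -- The supremum defining `lambdaSr` is over a bounded set, so it is not a junk value.
  refine le_csSup ⟨_, fun a ⟨f, hf, hd⟩ => card_le_indeg hv hvr f hf hd⟩ ?_
  refine ⟨fun i => {e | e.2 ≠ r ∧ e.1 = parR m ℓ r (i + 1) e.2}, fun i => ⟨?_, ?_, ?_⟩, ?_⟩
  · rintro ⟨u, w⟩ ⟨hw, hu⟩
    dsimp only at hw hu
    subst hu
    exact circ_adj_parR hl hlm (by omega) (by omega) hw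
  · refine isOutTree_of_parent _ r (fun v => rk m (i + 1) (v - r).val) fun w hw => ?_
    rw [parR_sub hl hlm (by omega)]
    refine rk_par hl hlm (by omega) (by omega) fun h => hw (sub_eq_zero.1 (Fin.ext h))
  · intro w _
    by_cases hw : w = r
    · exact Or.inr hw
    · exact Or.inl ⟨parR m ℓ r (i + 1) w, Or.inl ⟨hw, rfl⟩⟩
  · intro i j hij
    refine Set.eq_empty_iff_forall_notMem.2 ?_
    rintro ⟨u, w⟩ ⟨⟨-, h1⟩, ⟨-, h2⟩⟩
    dsimp only at h1 h2
    have h3 := parR_sub hl hlm (j := i + 1) (by omega) r w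
    have h4 := parR_sub hl hlm (j := j + 1) (by omega) r w
    rw [← h1] at h3
    rw [← h2] at h4
    have := par_inj hl (by omega) (by omega) (by omega) (by omega) (h3.symm.trans h4)
    exact hij (Fin.ext (by omega))

lemma circ_arcs_le (m ℓ : ℕ) : (circ m ℓ).Arcs.ncard ≤ (m + 1) * ℓ := by
  rw [arcs_eq_sum]
  calc _ ≤ ∑ _v : Fin (m + 1), ℓ := Finset.sum_le_sum fun v _ => ?_
    _ = _ := by simp
  have hinj : Function.Injective fun u : Fin (m + 1) => (v - u).val :=
    Fin.val_injective.comp sub_right_injective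
  rw [← Set.ncard_image_of_injective _ hinj]
  calc _ ≤ ((Finset.Icc 1 ℓ : Finset ℕ) : Set ℕ).ncard :=
        Set.ncard_le_ncard (by rintro _ ⟨u, hu, rfl⟩; exact Finset.mem_coe.2 (Finset.mem_Icc.2 hu))
          (Set.toFinite _)
    _ = ℓ := by rw [Set.ncard_coe_finset]; simp

lemma deleteArc_ncard_lt {n : ℕ} {D : Dgr (Fin n)} {e : Fin n × Fin n} (he : e ∈ D.Arcs) :
    (D.deleteArc e).Arcs.ncard < D.Arcs.ncard := by
  refine Set.ncard_lt_ncard ⟨fun p hp => hp.1, fun h => (h he).2 rfl⟩ (Set.toFinite _)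

/-- `g(n,k,ℓ) = nℓ` for all `2 ≤ k ≤ n` and
`1 ≤ ℓ ≤ n - 1`. -/
theorem stmt_14 (n k ℓ : ℕ) (hk : 2 ≤ k) (hkn : k ≤ n) (hl : 1 ≤ ℓ)
    (hln : ℓ ≤ n - 1) :
    gMin n k ℓ = n * ℓ := by
  obtain ⟨m, rfl⟩ : ∃ m, n = m + 1 := ⟨n - 1, by omega⟩
  have hlm : ℓ ≤ m := by omega
  have hlam := le_lambdaK_circ hk hkn hl hlm
  have harcs : (circ m ℓ).Arcs.ncard = (m + 1) * ℓ :=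
    le_antisymm (circ_arcs_le m ℓ) (le_arcs hk hkn hlam)
  have hmem : (m + 1) * ℓ ∈ {a | ∃ D : Dgr (Fin (m + 1)), MinASC D k ℓ ∧ D.Arcs.ncard = a} := by
    refine ⟨circ m ℓ, ⟨hlam, fun e he => ?_⟩, harcs⟩
    by_contra hcon
    have h1 := le_arcs (ℓ := ℓ) (D := (circ m ℓ).deleteArc e) hk hkn (by omega)
    have h2 := deleteArc_ncard_lt he
    omega
  refine le_antisymm (Nat.sInf_le hmem) (le_csInf ⟨_, hmem⟩ ?_)
  rintro _ ⟨D, hD, rfl⟩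
  exact le_arcs hk hkn hD.1

end TreeConn
end

section
/- Let n, k, ℓ be integers with 2 ≤ k ≤ n and 1 ≤ ℓ ≤ n−1. Then G(n,k,ℓ) ≥ nℓ, and G(n,k,ℓ) ≥ 2ℓ(n−ℓ) whenever n ≥ k+2ℓ. Moreover, G(n,k,ℓ) = (ℓ+1)(n−1) whenever ℓ ∈ {1, n−2, n−1}. -/
/-!
For `2 ≤ k ≤ n` the parameter `λ_k` does not depend on `k`: it is the ordinary arc-strong
connectivity, the minimum number of arcs in a cut (`le_lambdaK_iff`).  A set `S` containing two
vertices on opposite sides of a cut shows that `λ_k` is at most the size of the cut; conversely,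
Edmonds' branching theorem (`edmonds`, via Lovász's argument in `PTree.step`) supplies that many
arc-disjoint spanning out-trees from any root, and these are `(S, r)`-trees for every `S`.  So
`GMax n k ℓ` is the largest number of arcs of a minimally `ℓ`-arc-strong digraph on `n` vertices
(`GMax_eq`).

* The complete digraph is `(n - 1)`-arc-strong, hence contains a minimally `ℓ`-arc-strong spanning
  subdigraph, and this has at least `n * ℓ` arcs because all in-degrees are at least `ℓ`.
* The symmetric complete bipartite digraph with parts `ℓ ≤ n - ℓ` is minimally `ℓ`-arc-strong and
  has `2 * ℓ * (n - ℓ)` arcs.  For `ℓ = 1` this is the extremal digraph, as a minimally strong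
  digraph is the union of an out-branching and an in-branching at a common root.
* For `ℓ = n - 2`, being `ℓ`-arc-strong amounts to the complement being a partial permutation
  (`conn_compl` is the nontrivial direction).  A maximal partial permutation without fixed points
  has at least `n - 1` arcs, and a cycle on `n - 1` vertices is one with exactly `n - 1`.
* For `ℓ = n - 1` only the complete digraph qualifies.
-/

/-!
Formalization of directed tree connectivity (Sun, "Extremal results for
directed tree connectivity").

A digraph (no loops, no parallel arcs) on a vertex type `V` is given by an
irreflexive adjacency relation.  Out-trees, `(S,r)`-trees, the parameters
`κ_k`, `λ_k`, minimally generalized `(k,ℓ)`-vertex/arc-strongly connected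
digraphs, the families `D_{n,1}`, `D_{n,2}` and the extremal functions
`f, g, F, G` are defined below.
-/

namespace TreeConn

variable {V : Type}

/-! ### Cuts and Edmonds' branching theorem -/

/-- The in-degree of the vertex set `Y`: the number of arcs of `E` that enter `Y`. -/
def rho [DecidableEq V] (E : Finset (V × V)) (Y : Finset V) : ℕ :=
  (E.filter (fun e => e.1 ∉ Y ∧ e.2 ∈ Y)).card

lemma rho_mono [DecidableEq V] {E F : Finset (V × V)} (h : E ⊆ F) (Y : Finset V) :
    rho E Y ≤ rho F Y :=
  Finset.card_le_card (Finset.filter_subset_filter _ h)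

lemma rho_submod [DecidableEq V] (E : Finset (V × V)) (X Y : Finset V) :
    rho E (X ∩ Y) + rho E (X ∪ Y) ≤ rho E X + rho E Y := by
  simp only [rho, Finset.card_filter, ← Finset.sum_add_distrib]
  apply Finset.sum_le_sum
  intro e _
  by_cases h1 : e.1 ∈ X <;> by_cases h2 : e.1 ∈ Y <;> by_cases h3 : e.2 ∈ X <;>
    by_cases h4 : e.2 ∈ Y <;> simp [h1, h2, h3, h4]

lemma rho_insert_sdiff_le [DecidableEq V] (E A : Finset (V × V)) (p : V × V) (Y : Finset V) :
    rho (E \ A) Y ≤ rho (E \ insert p A) Y + 1 := by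
  have : (E \ A).filter (fun e => e.1 ∉ Y ∧ e.2 ∈ Y) ⊆
      insert p ((E \ insert p A).filter (fun e => e.1 ∉ Y ∧ e.2 ∈ Y)) := by
    intro e he
    by_cases hp : e = p <;> simp_all
  exact (Finset.card_le_card this).trans (Finset.card_insert_le _ _)

lemma rho_insert_sdiff_eq [DecidableEq V] (E A : Finset (V × V)) (p : V × V) (Y : Finset V)
    (hp : ¬ (p.1 ∉ Y ∧ p.2 ∈ Y)) : rho (E \ insert p A) Y = rho (E \ A) Y := by
  unfold rho
  congr 1
  ext e
  by_cases h : e = p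
  · subst h
    simp only [Finset.mem_filter, hp, and_false]
  · simp [h]

/-- `A` is (the arc set of) an out-tree in `E` with root `r` and vertex set `U`.  Recording `U`
separately makes the one-vertex tree `A = ∅`, `U = {r}` a legitimate case. -/
structure PTree (E : Finset (V × V)) (r : V) (U : Finset V) (A : Finset (V × V)) : Prop where
  sub : A ⊆ E
  root : r ∈ U
  mem : ∀ e ∈ A, e.1 ∈ U ∧ e.2 ∈ U
  nr : ∀ e ∈ A, e.2 ≠ r
  uniq : ∀ v ∈ U, v ≠ r → ∃! u, (u, v) ∈ A
  reach : ∀ v ∈ U, Relation.ReflTransGen (fun a b => (a, b) ∈ A) r v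

lemma PTree.insert [DecidableEq V] {E : Finset (V × V)} {r : V} {U : Finset V}
    {A : Finset (V × V)} (h : PTree E r U A) {u v : V} (hu : u ∈ U) (hv : v ∉ U)
    (he : (u, v) ∈ E) : PTree E r (Insert.insert v U) (Insert.insert (u, v) A) := by
  have hvr : v ≠ r := fun h' => hv (h' ▸ h.root)
  refine ⟨?_, ?_, ?_, ?_, ?_, ?_⟩
  · exact Finset.insert_subset he h.sub
  · exact Finset.mem_insert_of_mem h.root
  · intro e h'
    rcases Finset.mem_insert.1 h' with rfl | h'
    · simp [hu]
    · have := h.mem e h'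
      simp [this]
  · intro e h'
    rcases Finset.mem_insert.1 h' with rfl | h'
    · exact hvr
    · exact h.nr e h'
  · intro w hw hwr
    rcases Finset.mem_insert.1 hw with rfl | hw
    · refine ⟨u, by simp, ?_⟩
      intro y hy
      rcases Finset.mem_insert.1 hy with hy | hy
      · exact (Prod.ext_iff.1 hy).1
      · exact absurd (h.mem _ hy).2 hv
    · obtain ⟨x, hx, hx'⟩ := h.uniq w hw hwr
      refine ⟨x, Finset.mem_insert_of_mem hx, ?_⟩
      intro y hy
      rcases Finset.mem_insert.1 hy with hy | hy
      · have hwv : w = v := (Prod.ext_iff.1 hy).2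
        exact absurd (hwv ▸ hw) hv
      · exact hx' y hy
  · have mono : ∀ a b, (a, b) ∈ A → (a, b) ∈ Insert.insert (u, v) A :=
      fun a b hab => Finset.mem_insert_of_mem hab
    intro w hw
    rcases Finset.mem_insert.1 hw with rfl | hw
    · exact (Relation.ReflTransGen.mono mono _ _ (h.reach u hu)).tail (Finset.mem_insert_self _ _)
    · exact Relation.ReflTransGen.mono mono _ _ (h.reach w hw)

/-- Lovász's exchange step.  If every nonempty `Y ∌ r` has in-degree at least `m + 1` in `E`, and
at least `m` after removing the out-tree `A`, then `A` can be extended by one arc without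
destroying the latter property.  The arc is found inside an inclusion-minimal tight set. -/
lemma PTree.step [Fintype V] [DecidableEq V] {E : Finset (V × V)} {r : V} {U : Finset V}
    {A : Finset (V × V)} {m : ℕ} (h : PTree E r U A)
    (hE : ∀ Y : Finset V, Y.Nonempty → r ∉ Y → m + 1 ≤ rho E Y)
    (hA : ∀ Y : Finset V, Y.Nonempty → r ∉ Y → m ≤ rho (E \ A) Y) (hU : U ≠ Finset.univ) :
    ∃ u ∈ U, ∃ v, v ∉ U ∧ (u, v) ∈ E ∧
      ∀ Y : Finset V, Y.Nonempty → r ∉ Y → m ≤ rho (E \ Insert.insert (u, v) A) Y := by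
  -- no arc of `A` enters a set disjoint from `U`
  have key : ∀ Y : Finset V, rho (E \ A) (Y \ U) = rho E (Y \ U) := by
    intro Y
    unfold rho
    congr 1
    ext e
    simp only [Finset.mem_filter, Finset.mem_sdiff]
    constructor
    · tauto
    · rintro ⟨h1, h2, h3⟩
      exact ⟨⟨h1, fun h4 => h3.2 (h.mem e h4).2⟩, h2, h3⟩
  -- it suffices to find an arc from `U` to its complement that enters no tight set
  suffices hs : ∃ u ∈ U, ∃ v, v ∉ U ∧ (u, v) ∈ E ∧
      ∀ Y : Finset V, r ∉ Y → u ∉ Y → v ∈ Y → rho (E \ A) Y ≠ m by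
    obtain ⟨u, hu, v, hv, he, hY⟩ := hs
    refine ⟨u, hu, v, hv, he, fun Y hne hr => ?_⟩
    by_cases hp : u ∉ Y ∧ v ∈ Y
    · have h1 := hY Y hr hp.1 hp.2
      have h2 := hA Y hne hr
      have h3 := rho_insert_sdiff_le E A (u, v) Y
      omega
    · rw [rho_insert_sdiff_eq E A (u, v) Y hp]
      exact hA Y hne hr
  by_cases hT : ∃ Y : Finset V, r ∉ Y ∧ ¬ Y ⊆ U ∧ rho (E \ A) Y = m
  · obtain ⟨Y, ⟨hr, hYU, hY⟩, hmin⟩ := WellFounded.has_min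
      (wellFounded_lt : WellFounded (fun a b : Finset V => a < b))
      {Y | r ∉ Y ∧ ¬ Y ⊆ U ∧ rho (E \ A) Y = m} hT
    have hne : (Y \ U).Nonempty := by
      rwa [Finset.sdiff_nonempty]
    have hlt : rho (E \ A) Y < rho (E \ A) (Y \ U) := by
      rw [key, hY]
      exact hE _ hne (by simp [hr])
    obtain ⟨e, he1, he2⟩ := Finset.exists_mem_notMem_of_card_lt_card hlt
    simp only [Finset.mem_filter, Finset.mem_sdiff] at he1 he2
    have heY : e.1 ∈ Y := by tauto
    refine ⟨e.1, by tauto, e.2, by tauto, by tauto, ?_⟩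
    intro Z hrZ huZ hvZ hZ
    have hsub := rho_submod (E \ A) Y Z
    have hI := hA (Y ∩ Z) ⟨e.2, by simp [hvZ, he1.2.2.1]⟩ (by simp [hr])
    have hUn := hA (Y ∪ Z) ⟨e.2, by simp [hvZ]⟩ (by simp [hr, hrZ])
    refine hmin (Y ∩ Z) ⟨by simp [hr], ?_, by omega⟩ ?_
    · intro hc
      exact he1.2.2.2 (hc (by simp [hvZ, he1.2.2.1]))
    · refine Finset.ssubset_iff_subset_ne.2 ⟨Finset.inter_subset_left, fun hc => huZ ?_⟩
      rw [← hc] at heY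
      exact (Finset.mem_inter.1 heY).2
  · push Not at hT
    have h1 : 0 < rho E (Finset.univ \ U) := by
      have := hE (Finset.univ \ U) (by
        rw [Finset.sdiff_nonempty]
        exact fun hc => hU (Finset.univ_subset_iff.1 hc)) (by simp [h.root])
      omega
    obtain ⟨e, he⟩ := Finset.card_pos.1 h1
    simp only [Finset.mem_filter, Finset.mem_sdiff, Finset.mem_univ, true_and, not_not] at he
    refine ⟨e.1, he.2.1, e.2, he.2.2, he.1, ?_⟩
    intro Y hr _ hvY
    exact hT Y hr (fun hc => he.2.2 (hc hvY))

/-- A spanning out-tree can be removed at the cost of one in each in-degree. -/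
lemma exists_branching [Fintype V] [DecidableEq V] {E : Finset (V × V)} {r : V} {m : ℕ}
    (hE : ∀ Y : Finset V, Y.Nonempty → r ∉ Y → m + 1 ≤ rho E Y) :
    ∃ A, PTree E r Finset.univ A ∧
      ∀ Y : Finset V, Y.Nonempty → r ∉ Y → m ≤ rho (E \ A) Y := by
  have grow : ∀ j, j + 1 ≤ Fintype.card V → ∃ U A, U.card = j + 1 ∧ PTree E r U A ∧
      ∀ Y : Finset V, Y.Nonempty → r ∉ Y → m ≤ rho (E \ A) Y := by
    intro j
    induction j with
    | zero =>
      intro _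
      refine ⟨{r}, ∅, by simp, ⟨by simp, by simp, by simp, by simp, by simp, ?_⟩, ?_⟩
      · intro v hv
        rw [Finset.mem_singleton.1 hv]
      · intro Y h1 h2
        have := hE Y h1 h2
        simp only [Finset.sdiff_empty]
        omega
    | succ j ih =>
      intro hj
      obtain ⟨U, A, hc, hP, hA⟩ := ih (by omega)
      have hU : U ≠ Finset.univ := by
        rintro rfl
        rw [Finset.card_univ] at hc
        omega
      obtain ⟨u, hu, v, hv, he, hY⟩ := hP.step hE hA hU
      exact ⟨_, _, by rw [Finset.card_insert_of_notMem hv, hc], hP.insert hu hv he, hY⟩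
  have hpos : 0 < Fintype.card V := Fintype.card_pos_iff.2 ⟨r⟩
  obtain ⟨U, A, hc, hP, hA⟩ := grow (Fintype.card V - 1) (by omega)
  have hU : U = Finset.univ := Finset.eq_univ_of_card U (by omega)
  exact ⟨A, hU ▸ hP, hA⟩

/-- Edmonds' branching theorem: if every nonempty vertex set avoiding `r` is entered by at least
`m` arcs, then there are `m` pairwise arc-disjoint spanning out-trees rooted at `r`. -/
theorem edmonds [Fintype V] [DecidableEq V] {r : V} (m : ℕ) : ∀ E : Finset (V × V),
    (∀ Y : Finset V, Y.Nonempty → r ∉ Y → m ≤ rho E Y) →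
    ∃ f : Fin m → Finset (V × V), (∀ i, PTree E r Finset.univ (f i)) ∧
      ∀ i j, i ≠ j → Disjoint (f i) (f j) := by
  induction m with
  | zero => exact fun E _ => ⟨fun _ => ∅, fun i => i.elim0, fun i => i.elim0⟩
  | succ m ih =>
    intro E hE
    obtain ⟨A, hP, hA⟩ := exists_branching hE
    obtain ⟨f, hf, hd⟩ := ih (E \ A) hA
    have hAf : ∀ i, Disjoint A (f i) := fun i =>
      (Finset.disjoint_sdiff (s := A) (t := E)).mono_right (hf i).sub
    refine ⟨Fin.cons A f, ?_, ?_⟩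
    · intro i
      refine Fin.cases ?_ (fun i => ?_) i
      · exact hP
      · have h := hf i
        exact ⟨h.sub.trans Finset.sdiff_subset, h.root, h.mem, h.nr, h.uniq, h.reach⟩
    · intro i j
      refine Fin.cases ?_ (fun i => ?_) i <;> refine Fin.cases ?_ (fun j => ?_) j
      · simp
      · intro _
        simpa using hAf j
      · intro _
        simpa using (hAf i).symm
      · intro hij
        simpa using hd i j (fun h => hij (by rw [h]))

/-- A path from a vertex outside `Y` to a vertex of `Y` uses an arc entering `Y`. -/
lemma exists_entering {R : V → V → Prop} {a b : V} (h : Relation.ReflTransGen R a b)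
    (Y : Finset V) (ha : a ∉ Y) (hb : b ∈ Y) : ∃ u v, R u v ∧ u ∉ Y ∧ v ∈ Y := by
  induction h with
  | refl => exact absurd hb ha
  | @tail c d _ hcd ih =>
    by_cases hc : c ∈ Y
    · exact ih hc
    · exact ⟨c, d, hcd, hc, hb⟩

/-! ### Reduction of generalized connectivity to arc-strong connectivity -/

lemma tree_nonempty {D : Dgr V} {S : Set V} {r x : V} {T : Set (V × V)} (h : IsSRTree D S r T)
    (hx : x ∈ S) (hxr : x ≠ r) : T.Nonempty := by
  rcases h.2.2 hx with ⟨u, hu | hu⟩ | hu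
  · exact ⟨_, hu⟩
  · exact ⟨_, hu⟩
  · exact absurd hu hxr

/-- The family over which `lambdaSr` takes its supremum is bounded, because arc-disjoint nonempty
trees are distinguished by an arc of each; hence the supremum is attained. -/
lemma le_lambdaSr_iff [Finite V] {D : Dgr V} {S : Set V} {r x : V} (hx : x ∈ S) (hxr : x ≠ r)
    (m : ℕ) : m ≤ lambdaSr D S r ↔
      ∃ f : Fin m → Set (V × V), (∀ i, IsSRTree D S r (f i)) ∧
        ∀ i j, i ≠ j → ArcDisj (f i) (f j) := by
  have hb : BddAbove {m | ∃ f : Fin m → Set (V × V), (∀ i, IsSRTree D S r (f i)) ∧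
      ∀ i j, i ≠ j → ArcDisj (f i) (f j)} := by
    refine ⟨Nat.card (V × V), ?_⟩
    rintro m ⟨f, hf, hd⟩
    choose g hg using fun i => tree_nonempty (hf i) hx hxr
    have hinj : Function.Injective g := by
      intro i j hij
      by_contra hne
      have : g i ∈ f i ∩ f j := ⟨hg i, hij ▸ hg j⟩
      rw [hd i j hne] at this
      exact this
    simpa using Nat.card_le_card_of_injective g hinj
  constructor
  · intro h
    obtain ⟨f, hf, hd⟩ := Nat.sSup_mem
      (by exact ⟨0, fun i => i.elim0, fun i => i.elim0, fun i => i.elim0⟩) hb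
    exact ⟨fun i => f (Fin.castLE h i), fun i => hf _, fun i j hij =>
      hd _ _ (fun h' => hij (Fin.castLE_injective h h'))⟩
  · exact fun h => le_csSup hb h

/-- `E` is (the arc set of) an `ℓ`-arc-strong digraph: every cut contains at least `ℓ` arcs. -/
def Conn [Fintype V] [DecidableEq V] (E : Finset (V × V)) (ℓ : ℕ) : Prop :=
  ∀ Y : Finset V, Y.Nonempty → Y ≠ Finset.univ → ℓ ≤ rho E Y

/-- Generalized `k`-arc-strong connectivity does not depend on `k`: it equals arc-strong
connectivity. -/
lemma le_lambdaK_iff {n k : ℕ} (hk : 2 ≤ k) (hkn : k ≤ n) (ℓ : ℕ) (D : Dgr (Fin n))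
    (E : Finset (Fin n × Fin n)) (hE : ∀ e, e ∈ E ↔ D.Adj e.1 e.2) :
    ℓ ≤ lambdaK D k ↔ Conn E ℓ := by
  have ext : ∀ s : Finset (Fin n), s.card ≤ k → ∃ t : Finset (Fin n), s ⊆ t ∧ t.card = k := by
    intro s hs
    exact Finset.exists_superset_card_eq hs (by simpa using hkn)
  constructor
  · intro h Y hne hnu
    obtain ⟨v, hv⟩ := hne
    obtain ⟨r, hr⟩ : ∃ r, r ∉ Y := by
      by_contra! hc
      exact hnu (Finset.eq_univ_iff_forall.2 hc)
    have hvr : v ≠ r := fun h => hr (h ▸ hv)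
    obtain ⟨S, hS, hSk⟩ := ext {r, v} ((Finset.card_le_two).trans hk)
    have hrS : r ∈ (S : Set (Fin n)) := hS (by simp)
    have hvS : v ∈ (S : Set (Fin n)) := hS (by simp)
    have h1 : ℓ ≤ lambdaSr D S r :=
      h.trans (Nat.sInf_le ⟨S, r, hrS, by simpa using hSk, rfl⟩)
    obtain ⟨f, hf, hd⟩ := (le_lambdaSr_iff hvS hvr ℓ).1 h1
    have hc : ∀ i, ∃ e ∈ f i, e.1 ∉ Y ∧ e.2 ∈ Y := by
      intro i
      have hvt : v ∈ averts (f i) := by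
        rcases (hf i).2.2 hvS with h | h
        · exact h
        · exact absurd h hvr
      obtain ⟨a, b, hab, ha, hb⟩ := exists_entering ((hf i).2.1.1 v hvt) Y hr hv
      exact ⟨(a, b), hab, ha, hb⟩
    choose g hg hgY using hc
    have := Finset.card_le_card_of_injOn (s := Finset.univ)
      (t := E.filter (fun e => e.1 ∉ Y ∧ e.2 ∈ Y)) g
      (fun i _ => by
        have := (hf i).1 (hg i)
        simpa [hE] using ⟨this, hgY i⟩)
      (fun i _ j _ hij => by
        by_contra hne
        have : g i ∈ f i ∩ f j := ⟨hg i, hij ▸ hg j⟩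
        rw [hd i j hne] at this
        exact this)
    simpa [rho] using this
  · intro h
    apply le_csInf
    · obtain ⟨S, -, hSk⟩ := ext ∅ (by simp)
      obtain ⟨r, hr⟩ := Finset.card_pos.1 (show 0 < S.card by omega)
      exact ⟨_, S, r, hr, by simpa using hSk, rfl⟩
    · rintro _ ⟨S, r, hr, hSk, rfl⟩
      obtain ⟨x, hx, hxr⟩ := Set.exists_ne_of_one_lt_ncard (s := S) (by omega) r
      rw [le_lambdaSr_iff hx hxr]
      obtain ⟨f, hf, hd⟩ := edmonds (r := r) ℓ E
        (fun Y hne hr => h Y hne (fun hc => hr (hc ▸ Finset.mem_univ _)))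
      refine ⟨fun i => f i, fun i => ⟨?_, ⟨?_, ?_, ?_⟩, ?_⟩, ?_⟩
      · intro e he
        exact (hE e).1 ((hf i).sub he)
      · intro v _
        exact (hf i).reach v (Finset.mem_univ _)
      · intro e he
        exact (hf i).nr e he
      · intro v _ hvr
        exact (hf i).uniq v (Finset.mem_univ _) hvr
      · intro v _
        by_cases hvr : v = r
        · exact Or.inr hvr
        · obtain ⟨u, hu, -⟩ := (hf i).uniq v (Finset.mem_univ _) hvr
          exact Or.inl ⟨u, Or.inl hu⟩
      · intro i j hij
        have := hd i j hij
        rw [← Finset.disjoint_coe] at this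
        exact this.inter_eq

/-! ### Minimally arc-strong digraphs -/

/-- `E` is `ℓ`-arc-strong, but the deletion of any arc destroys this. -/
def MinConn [Fintype V] [DecidableEq V] (E : Finset (V × V)) (ℓ : ℕ) : Prop :=
  Conn E ℓ ∧ ∀ e ∈ E, ¬ Conn (E.erase e) ℓ

lemma Conn.mono [Fintype V] [DecidableEq V] {E F : Finset (V × V)} {ℓ : ℕ} (h : Conn E ℓ)
    (hEF : E ⊆ F) : Conn F ℓ :=
  fun Y h1 h2 => (h Y h1 h2).trans (rho_mono hEF Y)

lemma Conn.exists_min [Fintype V] [DecidableEq V] {E : Finset (V × V)} {ℓ : ℕ}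
    (h : Conn E ℓ) : ∃ F ⊆ E, MinConn F ℓ := by
  obtain ⟨F, hF, hmin⟩ := WellFounded.has_min
    (wellFounded_lt : WellFounded (fun a b : Finset (V × V) => a < b))
    {F | F ⊆ E ∧ Conn F ℓ} ⟨E, subset_rfl, h⟩
  exact ⟨F, hF.1, hF.2, fun e he hc =>
    hmin _ ⟨(Finset.erase_subset _ _).trans hF.1, hc⟩ (Finset.erase_ssubset he)⟩

lemma minConn_of_tight [Fintype V] [DecidableEq V] {E : Finset (V × V)} {ℓ : ℕ}
    (h : Conn E ℓ) (ht : ∀ e ∈ E, ∃ Y : Finset V, e.1 ∉ Y ∧ e.2 ∈ Y ∧ rho E Y ≤ ℓ) :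
    MinConn E ℓ := by
  refine ⟨h, fun e he hc => ?_⟩
  obtain ⟨Y, h1, h2, h3⟩ := ht e he
  have h4 := hc Y ⟨_, h2⟩ (fun h => h1 (h ▸ Finset.mem_univ _))
  have h5 : rho (E.erase e) Y < rho E Y := by
    apply Finset.card_lt_card
    refine Finset.ssubset_iff_subset_ne.2
      ⟨Finset.filter_subset_filter _ (Finset.erase_subset _ _), fun hh => ?_⟩
    have : e ∈ (E.erase e).filter (fun e => e.1 ∉ Y ∧ e.2 ∈ Y) := by
      rw [hh]
      simp [he, h1, h2]
    simp at this
  omega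

lemma minASC_iff {n k : ℕ} (hk : 2 ≤ k) (hkn : k ≤ n) {ℓ : ℕ} (hl : 1 ≤ ℓ) (D : Dgr (Fin n))
    (E : Finset (Fin n × Fin n)) (hE : ∀ e, e ∈ E ↔ D.Adj e.1 e.2) :
    MinASC D k ℓ ↔ MinConn E ℓ := by
  have h2 : ∀ e, ℓ ≤ lambdaK (D.deleteArc e) k ↔ Conn (E.erase e) ℓ := by
    intro e
    apply le_lambdaK_iff hk hkn
    intro x
    simp only [Finset.mem_erase, Dgr.deleteArc, hE]
    tauto
  unfold MinASC MinConn
  rw [le_lambdaK_iff hk hkn ℓ D E hE]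
  refine and_congr_right fun _ => forall_congr' fun e => ?_
  rw [← h2, hE]
  refine imp_congr Iff.rfl ?_
  omega

lemma GMax_eq {n k : ℕ} (hk : 2 ≤ k) (hkn : k ≤ n) {ℓ : ℕ} (hl : 1 ≤ ℓ) :
    GMax n k ℓ = sSup {m | ∃ E : Finset (Fin n × Fin n),
      E ⊆ Finset.univ.offDiag ∧ MinConn E ℓ ∧ E.card = m} := by
  classical
  unfold GMax
  congr 1
  ext m
  constructor
  · rintro ⟨D, hD, rfl⟩
    have hE : ∀ e, e ∈ D.Arcs.toFinset ↔ D.Adj e.1 e.2 :=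
      fun e => Set.mem_toFinset
    refine ⟨D.Arcs.toFinset, ?_, (minASC_iff hk hkn hl D _ hE).1 hD, ?_⟩
    · intro e he
      rw [hE] at he
      simp only [Finset.mem_offDiag, Finset.mem_univ, true_and]
      intro h
      rw [h] at he
      exact D.loopless _ he
    · rw [Set.ncard_eq_toFinset_card']
  · rintro ⟨E, hE, hM, rfl⟩
    refine ⟨⟨fun u v => (u, v) ∈ E, fun v hv => ?_⟩, ?_, ?_⟩
    · simpa using hE hv
    · exact (minASC_iff hk hkn hl _ E (fun e => Iff.rfl)).2 hM
    · exact Set.ncard_coe_finset E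

lemma le_GMax {n k : ℕ} (hk : 2 ≤ k) (hkn : k ≤ n) {ℓ : ℕ} (hl : 1 ≤ ℓ)
    {E : Finset (Fin n × Fin n)} (hE : E ⊆ Finset.univ.offDiag) (hM : MinConn E ℓ) :
    E.card ≤ GMax n k ℓ := by
  rw [GMax_eq hk hkn hl]
  refine le_csSup ⟨Fintype.card (Fin n × Fin n), ?_⟩ ⟨E, hE, hM, rfl⟩
  rintro _ ⟨F, -, -, rfl⟩
  exact Finset.card_le_univ F

lemma GMax_le {n k : ℕ} (hk : 2 ≤ k) (hkn : k ≤ n) {ℓ : ℕ} (hl : 1 ≤ ℓ) {N : ℕ}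
    (h : ∀ E : Finset (Fin n × Fin n), E ⊆ Finset.univ.offDiag → MinConn E ℓ → E.card ≤ N) :
    GMax n k ℓ ≤ N := by
  rw [GMax_eq hk hkn hl]
  apply csSup_le'
  rintro _ ⟨E, hE, hM, rfl⟩
  exact h E hE hM

lemma Conn.card_ge {n ℓ : ℕ} (hn : 2 ≤ n) {E : Finset (Fin n × Fin n)} (h : Conn E ℓ) :
    n * ℓ ≤ E.card := by
  rw [Finset.card_eq_sum_card_fiberwise (f := Prod.snd) (t := Finset.univ)
    (fun _ _ => Finset.mem_coe.2 (Finset.mem_univ _))]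
  calc n * ℓ = ∑ _v : Fin n, ℓ := by simp
    _ ≤ _ := Finset.sum_le_sum fun v _ => by
      have hv : ({v} : Finset (Fin n)) ≠ Finset.univ := by
        intro hc
        have := congrArg Finset.card hc
        simp at this
        omega
      refine (h {v} (by simp) hv).trans (Finset.card_le_card ?_)
      intro e
      simp only [Finset.mem_filter, Finset.mem_singleton]
      tauto

/-! ### Complete digraphs minus a partial permutation -/

lemma rho_offDiag [Fintype V] [DecidableEq V] (Y : Finset V) :
    rho Finset.univ.offDiag Y = Yᶜ.card * Y.card := by
  rw [rho, ← Finset.card_product]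
  congr 1
  ext e
  simp only [Finset.mem_filter, Finset.mem_offDiag, Finset.mem_univ, true_and,
    Finset.mem_product, Finset.mem_compl]
  refine ⟨fun h => h.2, fun h => ⟨fun hc => h.1 (hc ▸ h.2), h⟩⟩

lemma cut_cards {n : ℕ} {Y : Finset (Fin n)} (h1 : Y.Nonempty) (h2 : Y ≠ Finset.univ) :
    1 ≤ Y.card ∧ 1 ≤ Yᶜ.card ∧ Yᶜ.card + Y.card = n := by
  refine ⟨Finset.card_pos.2 h1, ?_, ?_⟩
  · rw [Nat.succ_le_iff, Finset.card_pos, Finset.nonempty_iff_ne_empty]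
    simpa using h2
  · rw [add_comm, Finset.card_add_card_compl, Fintype.card_fin]

lemma conn_offDiag (n : ℕ) : Conn (Finset.univ.offDiag : Finset (Fin n × Fin n)) (n - 1) := by
  intro Y h1 h2
  obtain ⟨ha, hb, hab⟩ := cut_cards h1 h2
  rw [rho_offDiag]
  obtain ⟨a, ha⟩ := Nat.exists_eq_add_of_le ha
  obtain ⟨b, hb⟩ := Nat.exists_eq_add_of_le hb
  have : n - 1 = 1 + a + b := by omega
  rw [this, ha, hb]
  nlinarith [Nat.zero_le (a * b)]

/-- If the removed arcs `M` form a partial permutation, every cut `(Yᶜ, Y)` loses at most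
`min |Y| |Yᶜ|` arcs. -/
lemma conn_compl {n : ℕ} {M : Finset (Fin n × Fin n)}
    (hf : Set.InjOn Prod.fst (M : Set (Fin n × Fin n)))
    (hs : Set.InjOn Prod.snd (M : Set (Fin n × Fin n))) :
    Conn (Finset.univ.offDiag \ M) (n - 2) := by
  intro Y h1 h2
  obtain ⟨ha, hb, hab⟩ := cut_cards h1 h2
  have h3 : Yᶜ.card * Y.card ≤ rho (Finset.univ.offDiag \ M) Y + rho M Y := by
    rw [← rho_offDiag]
    refine (Finset.card_le_card ?_).trans (Finset.card_union_le _ _)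
    intro e
    simp only [Finset.mem_filter, Finset.mem_union, Finset.mem_sdiff]
    tauto
  have h4 : rho M Y ≤ Y.card :=
    Finset.card_le_card_of_injOn Prod.snd
      (fun e he => (Finset.mem_filter.1 he).2.2)
      (hs.mono (fun e he => (Finset.mem_filter.1 he).1))
  have h5 : rho M Y ≤ Yᶜ.card :=
    Finset.card_le_card_of_injOn Prod.fst
      (fun e he => Finset.mem_compl.2 (Finset.mem_filter.1 he).2.1)
      (hf.mono (fun e he => (Finset.mem_filter.1 he).1))
  generalize rho (Finset.univ.offDiag \ M) Y = x at *
  generalize rho M Y = t at *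
  generalize Y.card = a at *
  generalize Yᶜ.card = b at *
  obtain ⟨a, rfl⟩ := Nat.exists_eq_add_of_le ha
  obtain ⟨b, rfl⟩ := Nat.exists_eq_add_of_le hb
  have : n - 2 = a + b := by omega
  rw [this]
  -- `(1 + b) * (1 + a) - t ≥ a + b` amounts to `t ≤ a * b + 1`
  have h6 : t ≤ a * b + 1 := by
    rcases Nat.eq_zero_or_pos a with rfl | ha'
    · omega
    · rcases Nat.eq_zero_or_pos b with rfl | hb'
      · omega
      · nlinarith
  nlinarith

lemma rho_singleton_le {n : ℕ} {E : Finset (Fin n × Fin n)} {v : Fin n} {A : Finset (Fin n)}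
    (h : ∀ u, u ≠ v → (u, v) ∈ E → u ∈ A) : rho E {v} ≤ A.card := by
  refine Finset.card_le_card_of_injOn Prod.fst ?_ ?_
  · rintro ⟨u, w⟩ he
    simp only [Finset.coe_filter, Finset.mem_singleton, Set.mem_ofPred_eq] at he
    obtain ⟨he, h1, rfl⟩ := he
    exact h u h1 he
  · rintro ⟨u, w⟩ he ⟨u', w'⟩ he' hh
    simp only [Finset.coe_filter, Finset.mem_singleton, Set.mem_ofPred_eq] at he he' hh
    rw [hh, he.2.2, he'.2.2]

lemma rho_compl_singleton_le {n : ℕ} {E : Finset (Fin n × Fin n)} {v : Fin n}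
    {A : Finset (Fin n)} (h : ∀ u, u ≠ v → (v, u) ∈ E → u ∈ A) : rho E {v}ᶜ ≤ A.card := by
  refine Finset.card_le_card_of_injOn Prod.snd ?_ ?_
  · rintro ⟨w, u⟩ he
    simp only [Finset.coe_filter, Finset.mem_compl, Finset.mem_singleton, Set.mem_ofPred_eq,
      not_not] at he
    obtain ⟨he, rfl, h1⟩ := he
    exact h u h1 he
  · rintro ⟨w, u⟩ he ⟨w', u'⟩ he' hh
    simp only [Finset.coe_filter, Finset.mem_compl, Finset.mem_singleton, Set.mem_ofPred_eq,
      not_not] at he he' hh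
    rw [hh, he.2.1, he'.2.1]

lemma minConn_offDiag (n : ℕ) :
    MinConn (Finset.univ.offDiag : Finset (Fin n × Fin n)) (n - 1) := by
  refine minConn_of_tight (conn_offDiag n) fun e he => ⟨{e.2}, ?_, by simp, ?_⟩
  · simpa using he
  · refine (rho_singleton_le (A := {e.2}ᶜ) (fun u hu _ => by simpa using hu)).trans ?_
    simp [Finset.card_compl]

/-- The complete digraph minus a cycle through all but one of the vertices. -/
lemma exists_minConn_sub_two {m : ℕ} (hm : 2 ≤ m) :
    ∃ E : Finset (Fin (m + 1) × Fin (m + 1)), E ⊆ Finset.univ.offDiag ∧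
      MinConn E (m - 1) ∧ E.card = m * m := by
  set M : Finset (Fin (m + 1) × Fin (m + 1)) :=
    Finset.univ.image (fun i : Fin m => (i.castSucc, (finRotate m i).castSucc)) with hM
  have hfix : ∀ i : Fin m, finRotate m i ≠ i := by
    intro i
    have : i ∈ (finRotate m).support := by
      rw [support_finRotate_of_le hm]
      exact Finset.mem_univ _
    exact Equiv.Perm.mem_support.1 this
  have hMoff : M ⊆ Finset.univ.offDiag := by
    intro e he
    obtain ⟨i, -, rfl⟩ := Finset.mem_image.1 he
    simp only [Finset.mem_offDiag, Finset.mem_univ, true_and]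
    exact fun h => hfix i (Fin.castSucc_injective _ h).symm
  have hMcard : M.card = m := by
    rw [hM, Finset.card_image_of_injective, Finset.card_univ, Fintype.card_fin]
    intro i j h
    exact Fin.castSucc_injective _ (Prod.ext_iff.1 h).1
  have hf : Set.InjOn Prod.fst (M : Set (Fin (m + 1) × Fin (m + 1))) := by
    intro e he e' he' h
    obtain ⟨i, -, rfl⟩ := Finset.mem_image.1 (Finset.mem_coe.1 he)
    obtain ⟨j, -, rfl⟩ := Finset.mem_image.1 (Finset.mem_coe.1 he')
    rw [Fin.castSucc_injective _ h]
  have hs : Set.InjOn Prod.snd (M : Set (Fin (m + 1) × Fin (m + 1))) := by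
    intro e he e' he' h
    obtain ⟨i, -, rfl⟩ := Finset.mem_image.1 (Finset.mem_coe.1 he)
    obtain ⟨j, -, rfl⟩ := Finset.mem_image.1 (Finset.mem_coe.1 he')
    rw [(finRotate m).injective (Fin.castSucc_injective _ h)]
  have hpair : ∀ x y : Fin (m + 1), x ≠ y → (({x, y} : Finset (Fin (m + 1)))ᶜ).card = m - 1 := by
    intro x y hxy
    rw [Finset.card_compl, Finset.card_pair hxy, Fintype.card_fin]
    omega
  refine ⟨Finset.univ.offDiag \ M, Finset.sdiff_subset,
    minConn_of_tight (conn_compl hf hs) ?_, ?_⟩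
  · rintro ⟨u, v⟩ he
    have huv : u ≠ v := by simpa using (Finset.mem_sdiff.1 he).1
    -- the two ends are not both the vertex missed by the cycle, so one of them is deficient
    rcases Fin.eq_castSucc_or_eq_last v with ⟨j, rfl⟩ | rfl
    · refine ⟨{j.castSucc}, by simpa using huv, by simp, ?_⟩
      have hj : (((finRotate m).symm j).castSucc, j.castSucc) ∈ M :=
        Finset.mem_image.2 ⟨(finRotate m).symm j, Finset.mem_univ _, by rw [Equiv.apply_symm_apply]⟩
      have hne : ((finRotate m).symm j).castSucc ≠ j.castSucc := by
        simpa using hMoff hj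
      change _ ≤ m - 1
      rw [← hpair _ _ hne]
      refine rho_singleton_le fun x hx hxE => ?_
      simp only [Finset.mem_compl, Finset.mem_insert, Finset.mem_singleton, not_or]
      refine ⟨?_, hx⟩
      rintro rfl
      exact (Finset.mem_sdiff.1 hxE).2 hj
    · obtain ⟨j, rfl⟩ : ∃ j : Fin m, u = j.castSucc := by
        rcases Fin.eq_castSucc_or_eq_last u with h | h
        · exact h
        · exact absurd h huv
      refine ⟨{j.castSucc}ᶜ, by simp, by simpa using huv.symm, ?_⟩
      have hj : (j.castSucc, (finRotate m j).castSucc) ∈ M :=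
        Finset.mem_image.2 ⟨j, Finset.mem_univ _, rfl⟩
      have hne : (finRotate m j).castSucc ≠ j.castSucc := by
        simpa using hfix j
      change _ ≤ m - 1
      rw [← hpair _ _ hne]
      refine rho_compl_singleton_le fun x hx hxE => ?_
      simp only [Finset.mem_compl, Finset.mem_insert, Finset.mem_singleton, not_or]
      refine ⟨?_, hx⟩
      rintro rfl
      exact (Finset.mem_sdiff.1 hxE).2 hj
  · rw [Finset.card_sdiff_of_subset hMoff, Finset.offDiag_card, hMcard, Finset.card_univ,
      Fintype.card_fin]
    have : (m + 1) * (m + 1) = m * m + 2 * m + 1 := by ring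
    omega

/-- In a minimally `(n - 2)`-arc-strong digraph the missing arcs form a partial permutation that
cannot be extended, so at least `n - 1` arcs are missing. -/
lemma card_le_sub_two {m : ℕ} (hm : 2 ≤ m) {E : Finset (Fin (m + 1) × Fin (m + 1))}
    (hE : E ⊆ Finset.univ.offDiag) (hM : MinConn E (m - 1)) : E.card ≤ m * m := by
  set M := Finset.univ.offDiag \ E with hMdef
  have hcards : M.card + E.card = m * m + m := by
    rw [hMdef, Finset.card_sdiff_add_card_eq_card hE, Finset.offDiag_card, Finset.card_univ,
      Fintype.card_fin]
    have : (m + 1) * (m + 1) = m * m + 2 * m + 1 := by ring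
    omega
  have hmemM : ∀ x y : Fin (m + 1), x ≠ y → ((x, y) ∈ M ↔ (x, y) ∉ E) := by
    intro x y h
    simp [hMdef, h]
  have hMne : ∀ x y : Fin (m + 1), (x, y) ∈ M → x ≠ y ∧ (x, y) ∉ E := by
    intro x y h
    simpa [hMdef] using h
  have huniv : ∀ v : Fin (m + 1), ({v} : Finset (Fin (m + 1))) ≠ Finset.univ := by
    intro v hc
    have := congrArg Finset.card hc
    simp at this
    omega
  have htriple : ∀ x y z : Fin (m + 1), x ≠ y → x ≠ z → y ≠ z →
      (({x, y, z} : Finset (Fin (m + 1)))ᶜ).card = m - 2 := by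
    intro x y z h1 h2 h3
    rw [Finset.card_compl, Finset.card_eq_three.2 ⟨x, y, z, h1, h2, h3, rfl⟩, Fintype.card_fin]
    omega
  -- two missing arcs at a vertex would leave a degree of at most `m - 2`
  have hf : Set.InjOn Prod.fst (M : Set (Fin (m + 1) × Fin (m + 1))) := by
    rintro ⟨u, x⟩ hx ⟨u', y⟩ hy (rfl : u = u')
    by_contra hne
    have hxy : x ≠ y := fun h => hne (by rw [h])
    have hx := hMne _ _ hx
    have hy := hMne _ _ hy
    have h1 := hM.1 {u}ᶜ ⟨x, by simpa using hx.1.symm⟩ (fun hc => by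
      have : u ∈ ({u}ᶜ : Finset (Fin (m + 1))) := hc ▸ Finset.mem_univ u
      simp at this)
    have h2 : rho E {u}ᶜ ≤ m - 2 := by
      rw [← htriple x y u hxy hx.1.symm hy.1.symm]
      refine rho_compl_singleton_le fun z hz hzE => ?_
      simp only [Finset.mem_compl, Finset.mem_insert, Finset.mem_singleton, not_or]
      refine ⟨?_, ?_, hz⟩
      · rintro rfl
        exact hx.2 hzE
      · rintro rfl
        exact hy.2 hzE
    omega
  have hs : Set.InjOn Prod.snd (M : Set (Fin (m + 1) × Fin (m + 1))) := by
    rintro ⟨x, u⟩ hx ⟨y, u'⟩ hy (rfl : u = u')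
    by_contra hne
    have hxy : x ≠ y := fun h => hne (by rw [h])
    have hx := hMne _ _ hx
    have hy := hMne _ _ hy
    have h1 := hM.1 {u} (by simp) (huniv u)
    have h2 : rho E {u} ≤ m - 2 := by
      rw [← htriple x y u hxy hx.1 hy.1]
      refine rho_singleton_le fun z hz hzE => ?_
      simp only [Finset.mem_compl, Finset.mem_insert, Finset.mem_singleton, not_or]
      refine ⟨?_, ?_, hz⟩
      · rintro rfl
        exact hx.2 hzE
      · rintro rfl
        exact hy.2 hzE
    omega
  by_contra hlt
  have hMlt : M.card < m := by omega
  obtain ⟨v, hv⟩ : ∃ v, v ∉ M.image Prod.snd := by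
    by_contra! hc
    have h1 := Finset.card_le_card (fun x _ => hc x : Finset.univ ⊆ M.image Prod.snd)
    have h2 := Finset.card_image_le (s := M) (f := Prod.snd)
    rw [Finset.card_univ, Fintype.card_fin] at h1
    omega
  obtain ⟨u, hu⟩ : ∃ u, u ∉ insert v (M.image Prod.fst) := by
    by_contra! hc
    have h1 := Finset.card_le_card (fun x _ => hc x : Finset.univ ⊆ insert v (M.image Prod.fst))
    have h2 := Finset.card_image_le (s := M) (f := Prod.fst)
    have h3 := Finset.card_insert_le v (M.image Prod.fst)
    rw [Finset.card_univ, Fintype.card_fin] at h1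
    omega
  simp only [Finset.mem_insert, not_or] at hu
  have huv : (u, v) ∈ E := by
    by_contra hc
    exact hu.2 (Finset.mem_image.2 ⟨_, (hmemM u v hu.1).2 hc, rfl⟩)
  apply hM.2 _ huv
  have heq : E.erase (u, v) = Finset.univ.offDiag \ insert (u, v) M := by
    ext e
    have := @hE e
    simp only [hMdef, Finset.mem_erase, Finset.mem_sdiff, Finset.mem_insert] at *
    tauto
  rw [heq]
  have huvM : (u, v) ∉ (M : Set (Fin (m + 1) × Fin (m + 1))) := fun h => (hMne _ _ h).2 huv
  apply conn_compl (n := m + 1)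
  · rw [Finset.coe_insert, Set.injOn_insert huvM]
    exact ⟨hf, by rw [← Finset.coe_image]; exact hu.2⟩
  · rw [Finset.coe_insert, Set.injOn_insert huvM]
    exact ⟨hs, by rw [← Finset.coe_image]; exact hv⟩

/-! ### Complete bipartite digraphs -/

/-- The symmetric complete bipartite digraph with parts of sizes `ℓ ≤ n - ℓ`.  Every arc has an
end in the larger part, whose vertices have in- and out-degree `ℓ`. -/
lemma exists_minConn_bip {n ℓ : ℕ} (hl : 1 ≤ ℓ) (hn : 2 * ℓ ≤ n) :
    ∃ E : Finset (Fin n × Fin n), E ⊆ Finset.univ.offDiag ∧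
      MinConn E ℓ ∧ E.card = 2 * ℓ * (n - ℓ) := by
  obtain ⟨A, -, hA⟩ := Finset.exists_subset_card_eq
    (s := (Finset.univ : Finset (Fin n))) (n := ℓ) (by simp; omega)
  have hAc : Aᶜ.card = n - ℓ := by rw [Finset.card_compl, hA, Fintype.card_fin]
  have hmem : ∀ e : Fin n × Fin n, e ∈ A ×ˢ Aᶜ ∪ Aᶜ ×ˢ A ↔ (e.1 ∈ A ↔ e.2 ∉ A) := by
    intro e
    simp only [Finset.mem_union, Finset.mem_product, Finset.mem_compl]
    tauto
  refine ⟨A ×ˢ Aᶜ ∪ Aᶜ ×ˢ A, ?_, minConn_of_tight ?_ ?_, ?_⟩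
  · intro e he
    rw [hmem] at he
    simp only [Finset.mem_offDiag, Finset.mem_univ, true_and]
    intro h
    rw [h] at he
    tauto
  · intro Y h1 h2
    have hlow : (A \ Y).card * (Aᶜ ∩ Y).card + (Aᶜ \ Y).card * (A ∩ Y).card ≤
        rho (A ×ˢ Aᶜ ∪ Aᶜ ×ˢ A) Y := by
      rw [← Finset.card_product, ← Finset.card_product, ← Finset.card_union_of_disjoint]
      · apply Finset.card_le_card
        intro e
        simp only [Finset.mem_union, Finset.mem_product, Finset.mem_compl, Finset.mem_sdiff,
          Finset.mem_inter, Finset.mem_filter]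
        tauto
      · rw [Finset.disjoint_left]
        intro e
        simp only [Finset.mem_product, Finset.mem_compl, Finset.mem_sdiff, Finset.mem_inter]
        tauto
    refine le_trans ?_ hlow
    have e1 := Finset.card_inter_add_card_sdiff A Y
    have e2 := Finset.card_inter_add_card_sdiff Aᶜ Y
    have e3 : (A ∩ Y).card + (Aᶜ ∩ Y).card = Y.card := by
      rw [Finset.inter_comm A, Finset.inter_comm Aᶜ, ← Finset.sdiff_eq_inter_compl]
      exact Finset.card_inter_add_card_sdiff Y A
    obtain ⟨c1, c2, c3⟩ := cut_cards h1 h2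
    rw [hA] at e1
    rw [hAc] at e2
    generalize (A ∩ Y).card = a at *
    generalize (A \ Y).card = a' at *
    generalize (Aᶜ ∩ Y).card = b at *
    generalize (Aᶜ \ Y).card = b' at *
    rcases Nat.eq_zero_or_pos a with rfl | ha
    · have : 1 ≤ b := by omega
      nlinarith
    · rcases Nat.eq_zero_or_pos a' with rfl | ha'
      · have : 1 ≤ b' := by omega
        nlinarith
      · have i1 : b ≤ a' * b := Nat.le_mul_of_pos_left b ha'
        have i2 : b' ≤ b' * a := Nat.le_mul_of_pos_right b' ha
        omega
  · rintro ⟨u, v⟩ he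
    rw [hmem] at he
    have huv : u ≠ v := by
      rintro rfl
      tauto
    by_cases hv : v ∈ A
    · have hu : u ∉ A := by tauto
      refine ⟨{u}ᶜ, by simp, by simpa using huv.symm, ?_⟩
      rw [← hA]
      refine rho_compl_singleton_le fun x _ hx => ?_
      rw [hmem] at hx
      tauto
    · refine ⟨{v}, by simpa using huv, by simp, ?_⟩
      rw [← hA]
      refine rho_singleton_le fun x _ hx => ?_
      rw [hmem] at hx
      tauto
  · rw [Finset.card_union_of_disjoint, Finset.card_product, Finset.card_product, hA, hAc]
    · ring
    · rw [Finset.disjoint_left]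
      intro e
      simp only [Finset.mem_product, Finset.mem_compl]
      tauto

/-! ### Minimally strong digraphs -/

lemma PTree.card_le {n : ℕ} {E A : Finset (Fin n × Fin n)} {r : Fin n}
    (h : PTree E r Finset.univ A) : A.card ≤ n - 1 := by
  have : A.card ≤ (Finset.univ.erase r).card := by
    refine Finset.card_le_card_of_injOn Prod.snd ?_ ?_
    · intro e he
      simpa using h.nr e he
    · rintro ⟨x, u⟩ hx ⟨y, u'⟩ hy (rfl : u = u')
      rw [(h.uniq u (Finset.mem_univ _) (h.nr _ hx)).unique hx hy]
  simpa using this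

/-- A minimally strong digraph is the union of an out-branching and an in-branching with a common
root; the latter is an out-branching of the reversed digraph. -/
lemma card_le_one {n : ℕ} (hn : 2 ≤ n) {E : Finset (Fin n × Fin n)} (hM : MinConn E 1) :
    E.card ≤ 2 * (n - 1) := by
  let r : Fin n := ⟨0, by omega⟩
  have hne : ∀ Y : Finset (Fin n), r ∉ Y → Y ≠ Finset.univ := by
    intro Y h hc
    exact h (hc ▸ Finset.mem_univ _)
  obtain ⟨T, hT, -⟩ := exists_branching (r := r) (m := 0) (E := E)
    (fun Y h1 h2 => hM.1 Y h1 (hne Y h2))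
  have hswap : ∀ (F : Finset (Fin n × Fin n)) (e : Fin n × Fin n),
      e ∈ F.image Prod.swap ↔ e.swap ∈ F := by
    rintro F ⟨x, y⟩
    simp
  obtain ⟨T', hT', -⟩ := exists_branching (r := r) (m := 0) (E := E.image Prod.swap) (by
    intro Y h1 h2
    have h3 := hM.1 Yᶜ ⟨r, by simpa using h2⟩ (fun hc => by
      obtain ⟨y, hy⟩ := h1
      have : y ∈ Yᶜ := hc ▸ Finset.mem_univ y
      simp [hy] at this)
    obtain ⟨e, he⟩ := Finset.card_pos.1 h3
    simp only [Finset.mem_filter, Finset.mem_compl, not_not] at he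
    refine Finset.card_pos.2 ⟨e.swap, ?_⟩
    simp only [Finset.mem_filter, hswap, Prod.swap_swap, Prod.fst_swap, Prod.snd_swap]
    tauto)
  have hsubset : T ∪ T'.image Prod.swap ⊆ E := by
    refine Finset.union_subset hT.sub ?_
    intro e he
    rw [hswap] at he
    simpa only [hswap, Prod.swap_swap] using hT'.sub he
  have hconn : Conn (T ∪ T'.image Prod.swap) 1 := by
    intro Y h1 h2
    refine Finset.card_pos.2 ?_
    by_cases hr : r ∈ Y
    · obtain ⟨w, hw⟩ : ∃ w, w ∉ Y := by
        by_contra! hc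
        exact h2 (Finset.eq_univ_iff_forall.2 hc)
      obtain ⟨a, b, hab, ha, hb⟩ := exists_entering (hT'.reach w (Finset.mem_univ _)) Yᶜ
        (by simpa using hr) (by simpa using hw)
      refine ⟨(b, a), ?_⟩
      simp only [Finset.mem_filter, Finset.mem_union, hswap, Prod.swap_prod_mk]
      simp only [Finset.mem_compl, not_not] at ha hb
      exact ⟨Or.inr hab, hb, ha⟩
    · obtain ⟨w, hw⟩ := h1
      obtain ⟨a, b, hab, ha, hb⟩ := exists_entering (hT.reach w (Finset.mem_univ _)) Y hr hw
      refine ⟨(a, b), ?_⟩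
      simp only [Finset.mem_filter, Finset.mem_union]
      exact ⟨Or.inl hab, ha, hb⟩
  have hEsub : E ⊆ T ∪ T'.image Prod.swap := by
    intro e he
    by_contra hc
    exact hM.2 e he (hconn.mono (Finset.subset_erase.2 ⟨hsubset, hc⟩))
  have h1 := Finset.card_le_card hEsub
  have h2 := Finset.card_union_le T (T'.image Prod.swap)
  have h3 := Finset.card_image_le (s := T') (f := Prod.swap)
  have h4 := hT.card_le
  have h5 := hT'.card_le
  omega

/-- `G(n,k,ℓ) ≥ nℓ`; `G(n,k,ℓ) ≥ 2ℓ(n-ℓ)` when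
`n ≥ k + 2ℓ`; and `G(n,k,ℓ) = (ℓ+1)(n-1)` when `ℓ ∈ {1, n-2, n-1}`. -/
theorem stmt_16 (n k ℓ : ℕ) (hk : 2 ≤ k) (hkn : k ≤ n) (hl : 1 ≤ ℓ)
    (hln : ℓ ≤ n - 1) :
    n * ℓ ≤ GMax n k ℓ ∧
    (k + 2 * ℓ ≤ n → 2 * ℓ * (n - ℓ) ≤ GMax n k ℓ) ∧
    (ℓ = 1 ∨ ℓ = n - 2 ∨ ℓ = n - 1 →
      GMax n k ℓ = (ℓ + 1) * (n - 1)) := by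
  have hn : 2 ≤ n := hk.trans hkn
  refine ⟨?_, ?_, ?_⟩
  · obtain ⟨F, hF, hM⟩ := Conn.exists_min
      (fun Y h1 h2 => hln.trans (conn_offDiag n Y h1 h2) :
        Conn (Finset.univ.offDiag : Finset (Fin n × Fin n)) ℓ)
    exact (hM.1.card_ge hn).trans (le_GMax hk hkn hl hF hM)
  · intro h
    obtain ⟨E, hE, hM, hc⟩ := exists_minConn_bip hl (show 2 * ℓ ≤ n by omega)
    exact hc ▸ le_GMax hk hkn hl hE hM
  · rintro (rfl | rfl | rfl)
    · apply le_antisymm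
      · exact GMax_le hk hkn hl fun E _ hM => card_le_one hn hM
      · obtain ⟨E, hE, hM, hc⟩ := exists_minConn_bip le_rfl (show 2 * 1 ≤ n by omega)
        exact hc ▸ le_GMax hk hkn hl hE hM
    · obtain ⟨m, rfl⟩ : ∃ m, n = m + 1 := ⟨n - 1, by omega⟩
      have hm : 2 ≤ m := by omega
      have h1 : m + 1 - 2 = m - 1 := by omega
      have h2 : m - 1 + 1 = m := by omega
      rw [h1] at hl ⊢
      rw [h2, Nat.add_sub_cancel]
      apply le_antisymm
      · exact GMax_le hk hkn hl fun E hE hM => card_le_sub_two hm hE hM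
      · obtain ⟨E, hE, hM, hc⟩ := exists_minConn_sub_two hm
        exact hc ▸ le_GMax hk hkn hl hE hM
    · have hoff : (Finset.univ.offDiag : Finset (Fin n × Fin n)).card =
          (n - 1 + 1) * (n - 1) := by
        rw [Finset.offDiag_card, Finset.card_univ, Fintype.card_fin, Nat.sub_add_cancel (by omega),
          Nat.mul_sub_one]
      rw [← hoff]
      apply le_antisymm
      · exact GMax_le hk hkn hl fun E hE _ => Finset.card_le_card hE
      · exact le_GMax hk hkn hl subset_rfl (minConn_offDiag n)

end TreeConn
end

section
/- Let n, k, ℓ be integers with k ≥ 2, ℓ ≥ 1 and n ≥ k+2ℓ. Let H₂ = ↔K_{ℓ, n−ℓ} be the complete bipartite digraph with parts of sizes ℓ and n−ℓ (all arcs in both directions between the two parts). Then H₂ is minimally generalized (k,ℓ)-vertex-strongly connected and minimally generalized (k,ℓ)-arc-strongly connected. -/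
/-!
Write `A` for the part of size `ℓ` and `B` for the other part.

Lower bound. Fix `S` of size `k` and a root `r ∈ S`. Since `n - ℓ - k ≥ ℓ`, there are distinct
vertices `d_x ∈ B \ S`, one for each `x ∈ A`. For each `x ∈ A` there is an `(S,r)`-tree with
vertex set `S ∪ {x, d_x}`:
* if `r ∈ B`, take `r → x`, then `x → s` for `s ∈ S ∩ B` and `x → d_x`, then `d_x → y` for the
  other `y ∈ S ∩ A`;
* if `r ∈ A`, take `r → d_x`, then `d_x → y` for `y ∈ (S ∩ A) ∪ {x}`, `y ≠ r`, then `x → s` for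
  `s ∈ S ∩ B`.
Two of these trees share no vertex outside `S`, and a vertex of `S` other than `r` has different
parents in them; hence these `ℓ` trees are pairwise internally disjoint. They are encoded by a
parent function (`parentTree`); see `exists_trees`.

Minimality. A set of arcs that meets every `(S,r)`-tree bounds the number of arc-disjoint
`(S,r)`-trees (`card_le_of_hits`). Every arc has an endpoint `b ∈ B`. After the arc is deleted,
`b` has in-degree or out-degree at most `ℓ - 1`. In the first case take `S ∋ b` with another
vertex as root, as every tree contains an arc into `b`; in the second take `r = b`, as every tree
contains an arc out of its root.
-/

/-!
Formalization of directed tree connectivity (Sun, "Extremal results for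
directed tree connectivity").

A digraph (no loops, no parallel arcs) on a vertex type `V` is given by an
irreflexive adjacency relation.  Out-trees, `(S,r)`-trees, the parameters
`κ_k`, `λ_k`, minimally generalized `(k,ℓ)`-vertex/arc-strongly connected
digraphs, the families `D_{n,1}`, `D_{n,2}` and the extremal functions
`f, g, F, G` are defined below.
-/

namespace TreeConn

variable {V : Type}

/-- The arcs `(p v, v)` for `v ∈ W`: each vertex of `W` is joined to its parent under `p`. -/
def parentTree (p : V → V) (W : Set V) : Set (V × V) := {e | e.2 ∈ W ∧ e.1 = p e.2}

lemma mem_parentTree {p : V → V} {W : Set V} {u v : V} :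
    (u, v) ∈ parentTree p W ↔ v ∈ W ∧ u = p v := Iff.rfl

lemma averts_parentTree {p : V → V} {W : Set V} {r : V}
    (h : ∀ v ∈ W, p v = r ∨ p v ∈ W) {v : V} (hv : v ∈ averts (parentTree p W)) :
    v = r ∨ v ∈ W := by
  obtain ⟨u, hu | hu⟩ := hv
  · exact Or.inr hu.1
  · rw [mem_parentTree] at hu
    rw [hu.2]
    exact h u hu.1

/-- The rank `d` decreases along `p`, so following parents from any vertex of `W` ends at `r`. -/
lemma isOutTree_parentTree {p : V → V} {W : Set V} {r : V} (d : V → ℕ) (hr : r ∉ W)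
    (h : ∀ v ∈ W, p v = r ∨ (p v ∈ W ∧ d (p v) < d v)) :
    IsOutTree (parentTree p W) r := by
  have h' : ∀ v ∈ W, p v = r ∨ p v ∈ W := fun v hv => (h v hv).imp id And.left
  have key : ∀ m : ℕ, ∀ v ∈ W, d v = m →
      Relation.ReflTransGen (fun a b => (a, b) ∈ parentTree p W) r v := by
    intro m
    induction m using Nat.strong_induction_on with
    | _ m ih =>
      intro v hv hm
      rcases h v hv with h1 | ⟨h1, h2⟩
      · exact Relation.ReflTransGen.single ⟨hv, h1.symm⟩
      · exact (ih _ (hm ▸ h2) _ h1 rfl).tail ⟨hv, rfl⟩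
  refine ⟨fun v hv => ?_, fun e he h => hr (h ▸ he.1), fun v hv hvr => ?_⟩
  · rcases averts_parentTree h' hv with rfl | hv
    · exact Relation.ReflTransGen.refl
    · exact key _ v hv rfl
  · have hvW := (averts_parentTree h' hv).resolve_left hvr
    exact ⟨p v, ⟨hvW, rfl⟩, fun u hu => hu.2⟩

lemma tverts_parentTree {p : V → V} {W : Set V} {r : V}
    (h : ∀ v ∈ W, p v = r ∨ p v ∈ W) :
    tverts (parentTree p W) r = insert r W := by
  ext v
  constructor
  · rintro (hv | hv)
    · exact averts_parentTree h hv
    · exact Or.inl hv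
  · rintro (hv | hv)
    · exact Or.inr hv
    · exact Or.inl ⟨p v, Or.inl ⟨hv, rfl⟩⟩

lemma exists_arc_into {D : Dgr V} {S : Set V} {r b : V} {T : Set (V × V)}
    (hT : IsSRTree D S r T) (hb : b ∈ S) (hbr : b ≠ r) : ∃ u, (u, b) ∈ T := by
  rcases hT.2.2 hb with h | h
  · obtain ⟨u, hu, -⟩ := hT.2.1.2.2 b h hbr
    exact ⟨u, hu⟩
  · exact absurd h hbr

lemma exists_arc_from_root {D : Dgr V} {S : Set V} {r b : V} {T : Set (V × V)}
    (hT : IsSRTree D S r T) (hb : b ∈ S) (hbr : b ≠ r) : ∃ w, (r, w) ∈ T := by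
  rcases hT.2.2 hb with h | h
  · rcases (hT.2.1.1 b h).cases_head with h | ⟨w, hw, -⟩
    · exact absurd h.symm hbr
    · exact ⟨w, hw⟩
  · exact absurd h hbr

/-- Pairwise arc-disjoint sets that all meet `C` number at most `|C|`. -/
lemma card_le_of_hits {m : ℕ} (C : Finset (V × V)) (f : Fin m → Set (V × V))
    (hC : ∀ i, ∃ e ∈ f i, e ∈ C) (hf : ∀ i j, i ≠ j → ArcDisj (f i) (f j)) : m ≤ C.card := by
  choose g hg hgC using hC
  have hinj : Function.Injective g := by
    intro i j hij
    by_contra hne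
    have : g i ∈ f i ∩ f j := ⟨hg i, hij ▸ hg j⟩
    rw [hf i j hne] at this
    exact this
  simpa using Finset.card_le_card_of_injOn (s := Finset.univ) g (fun i _ => hgC i) hinj.injOn

lemma lambdaSr_le {D : Dgr V} {S : Set V} {r : V} (C : Finset (V × V))
    (hC : ∀ T, IsSRTree D S r T → ∃ e ∈ T, e ∈ C) : lambdaSr D S r ≤ C.card :=
  csSup_le' fun _ ⟨f, hf, hd⟩ => card_le_of_hits C f (fun i => hC _ (hf i)) hd

lemma kappaSr_le {D : Dgr V} {S : Set V} {r : V} (C : Finset (V × V))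
    (hC : ∀ T, IsSRTree D S r T → ∃ e ∈ T, e ∈ C) : kappaSr D S r ≤ C.card :=
  csSup_le' fun _ ⟨f, hf, hd⟩ =>
    card_le_of_hits C f (fun i => hC _ (hf i)) fun i j h => (hd i j h).1

/-- The set of all arcs meets every `(S,r)`-tree when `|S| ≥ 2`, so the suprema defining
`κ_{S,r}` and `λ_{S,r}` are over bounded sets and any family of trees bounds them from below. -/
lemma le_of_trees [Fintype V] {D : Dgr V} {S : Set V} {r : V} {m : ℕ} (hS : 1 < S.ncard)
    (f : Fin m → Set (V × V)) (hf : ∀ i, IsSRTree D S r (f i))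
    (hd : ∀ i j, i ≠ j → IntDisj S r (f i) (f j)) :
    m ≤ kappaSr D S r ∧ m ≤ lambdaSr D S r := by
  obtain ⟨b, hb, hbr⟩ := Set.exists_ne_of_one_lt_ncard hS r
  have hit : ∀ T, IsSRTree D S r T → ∃ e ∈ T, e ∈ (Finset.univ : Finset (V × V)) := by
    intro T hT
    obtain ⟨u, hu⟩ := exists_arc_into hT hb hbr
    exact ⟨_, hu, Finset.mem_univ _⟩
  constructor
  · refine le_csSup ⟨(Finset.univ : Finset (V × V)).card, ?_⟩ ⟨f, hf, hd⟩
    rintro _ ⟨g, hg, hgd⟩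
    exact card_le_of_hits _ g (fun i => hit _ (hg i)) fun i j h => (hgd i j h).1
  · refine le_csSup ⟨(Finset.univ : Finset (V × V)).card, ?_⟩ ⟨f, hf, fun i j h => (hd i j h).1⟩
    rintro _ ⟨g, hg, hgd⟩
    exact card_le_of_hits _ g (fun i => hit _ (hg i)) hgd

/-- The trees of the lower bound, for a complete bipartite digraph with part `A` enumerated by `x`;
the vertices `d i` are the private ones outside `A ∪ S`. -/
lemma exists_trees {m : ℕ} {D : Dgr V} {A : Set V}
    (hD : ∀ u v, D.Adj u v ↔ (u ∈ A ∧ v ∉ A) ∨ (u ∉ A ∧ v ∈ A))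
    {S : Set V} {r : V} (hr : r ∈ S) (x d : Fin m → V)
    (hx : Function.Injective x) (hd : Function.Injective d)
    (hxA : ∀ i, x i ∈ A) (hdA : ∀ i, d i ∉ A) (hdS : ∀ i, d i ∉ S) :
    ∃ f : Fin m → Set (V × V), (∀ i, IsSRTree D S r (f i)) ∧
      ∀ i j, i ≠ j → IntDisj S r (f i) (f j) := by
  classical
  let W : Fin m → Set V := fun i => {v | (v ∈ S ∨ v = x i ∨ v = d i) ∧ v ≠ r}
  -- It suffices to give, for each `i`, a parent function on `W i` with a rank, such that parents
  -- of a common vertex in different trees differ.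
  suffices h : ∃ (p : Fin m → V → V) (rk : Fin m → V → ℕ),
      (∀ i, ∀ v ∈ W i, D.Adj (p i v) v) ∧
      (∀ i, ∀ v ∈ W i, p i v = r ∨ (p i v ∈ W i ∧ rk i (p i v) < rk i v)) ∧
      (∀ i j, i ≠ j → ∀ v ∈ W i, v ∈ W j → p i v ≠ p j v) by
    obtain ⟨p, rk, hadj, hpar, hdis⟩ := h
    have hv : ∀ i, tverts (parentTree (p i) (W i)) r = insert r (W i) := fun i =>
      tverts_parentTree fun v hv => (hpar i v hv).imp id And.left
    refine ⟨fun i => parentTree (p i) (W i), fun i => ⟨?_, ?_, ?_⟩, fun i j hij => ⟨?_, ?_⟩⟩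
    · rintro ⟨u, v⟩ ⟨h1, h2⟩
      have := hadj i v h1
      simp only at h2
      exact h2 ▸ this
    · exact isOutTree_parentTree (rk i) (fun h => h.2 rfl) (hpar i)
    · intro s hs
      rw [hv]
      by_cases h : s = r
      · exact Or.inl h
      · exact Or.inr ⟨Or.inl hs, h⟩
    · refine Set.eq_empty_iff_forall_notMem.mpr ?_
      rintro ⟨u, v⟩ ⟨h1, h2⟩
      exact hdis i j hij v h1.1 h2.1 (h1.2.symm.trans h2.2)
    · simp only [hv]
      have h1 := hx.ne hij
      have h2 := hd.ne hij
      have h3 : x i ≠ d j := fun h => hdA j (h ▸ hxA i)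
      have h4 : x j ≠ d i := fun h => hdA i (h ▸ hxA j)
      ext v
      simp only [W, Set.mem_inter_iff, Set.mem_insert_iff, Set.mem_ofPred_eq]
      grind
  by_cases hrA : r ∈ A
  · refine ⟨fun i v => if v = d i then r else if v ∈ A then d i else x i,
      fun i v => if v = d i then 0 else if v ∈ A then 1 else 2, ?_, ?_, ?_⟩
    · intro i v hv
      have := hxA i
      have := hdA i
      simp only [W, Set.mem_ofPred_eq] at hv
      rw [hD]
      grind
    · intro i v hv
      have := hxA i
      have := hdA i
      have := hdS i
      simp only [W, Set.mem_ofPred_eq] at hv ⊢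
      grind
    · intro i j hij v hi hj
      have := hx.ne hij
      have := hd.ne hij
      have := hdS i
      have := hdS j
      have := hxA i
      have := hxA j
      have := hdA i
      have := hdA j
      simp only [W, Set.mem_ofPred_eq] at hi hj
      grind
  · refine ⟨fun i v => if v = x i then r else if v ∈ A then d i else x i,
      fun i v => if v = x i then 0 else if v ∈ A then 2 else 1, ?_, ?_, ?_⟩
    · intro i v hv
      have := hxA i
      have := hdA i
      simp only [W, Set.mem_ofPred_eq] at hv
      rw [hD]
      grind
    · intro i v hv
      have := hxA i
      have := hdA i
      have := hdS i
      simp only [W, Set.mem_ofPred_eq] at hv ⊢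
      grind
    · intro i j hij v hi hj
      have := hx.ne hij
      have := hd.ne hij
      have := hdS i
      have := hdS j
      have := hxA i
      have := hxA j
      have := hdA i
      have := hdA j
      simp only [W, Set.mem_ofPred_eq] at hi hj
      grind

/-- There is a `k`-set containing two prescribed vertices. -/
lemma exists_set_ncard {n k : ℕ} (hk : 2 ≤ k) (hkn : k ≤ n) {a b : Fin n} (hab : a ≠ b) :
    ∃ S : Set (Fin n), a ∈ S ∧ b ∈ S ∧ S.ncard = k := by
  obtain ⟨t, h1, -, h3⟩ := Finset.exists_subsuperset_card_eq
    (Finset.subset_univ ({a, b} : Finset (Fin n))) (n := k)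
    (by rw [Finset.card_pair hab]; exact hk) (by simpa using hkn)
  exact ⟨t, h1 (by simp), h1 (by simp), by rw [Set.ncard_coe_finset, h3]⟩

/-- There is room outside `A ∪ S` for the private vertices of the trees. -/
lemma exists_private_s18 {n ℓ : ℕ} (x : Fin ℓ → Fin n) (S : Set (Fin n))
    (hn : S.ncard + 2 * ℓ ≤ n) :
    ∃ d : Fin ℓ → Fin n, Function.Injective d ∧ (∀ i j, d i ≠ x j) ∧ ∀ i, d i ∉ S := by
  classical
  let U : Finset (Fin n) := Finset.univ.image x ∪ S.toFinset
  have hU : U.card ≤ ℓ + S.ncard := by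
    refine (Finset.card_union_le _ _).trans (Nat.add_le_add ?_ ?_)
    · simpa using Finset.card_image_le (s := Finset.univ) (f := x)
    · rw [Set.ncard_eq_toFinset_card']
  have hc : Fintype.card (Fin ℓ) ≤ Fintype.card {v // v ∈ Uᶜ} := by
    rw [Fintype.card_coe, Finset.card_compl, Fintype.card_fin, Fintype.card_fin]
    omega
  obtain ⟨e⟩ := Function.Embedding.nonempty_of_card_le hc
  have he : ∀ i, (e i : Fin n) ∉ U := fun i => Finset.mem_compl.mp (e i).2
  refine ⟨fun i => e i, fun i j h => e.injective (Subtype.ext h), fun i j h => he i ?_,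
    fun i h => he i ?_⟩
  · exact Finset.mem_union_left _ (Finset.mem_image.mpr ⟨j, Finset.mem_univ _, h.symm⟩)
  · exact Finset.mem_union_right _ (Set.mem_toFinset.mpr h)

/-- for `k ≥ 2`, `ℓ ≥ 1` and `n ≥ k + 2ℓ`, the complete
bipartite digraph `H₂ = ↔K_{ℓ, n-ℓ}` (parts: vertices of `Fin n` with
value `< ℓ`, and the rest) is minimally generalized `(k,ℓ)`-vertex-strongly
connected and minimally generalized `(k,ℓ)`-arc-strongly connected. -/
theorem stmt_18 (n k ℓ : ℕ) (hk : 2 ≤ k) (hl : 1 ≤ ℓ) (hn : k + 2 * ℓ ≤ n)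
    (H₂ : Dgr (Fin n))
    (hH : ∀ u v : Fin n, H₂.Adj u v ↔
      ((u.val < ℓ ∧ ¬ v.val < ℓ) ∨ (¬ u.val < ℓ ∧ v.val < ℓ))) :
    MinVSC H₂ k ℓ ∧ MinASC H₂ k ℓ := by
  classical
  have hln : ℓ ≤ n := by omega
  let x : Fin ℓ → Fin n := Fin.castLE hln
  have hx : Function.Injective x := Fin.castLE_injective hln
  have hxA : ∀ v : Fin n, v.val < ℓ ↔ ∃ i, x i = v :=
    fun v => ⟨fun h => ⟨⟨v, h⟩, rfl⟩, fun ⟨i, hi⟩ => hi ▸ i.2⟩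
  have lower : ∀ (S : Set (Fin n)) (r : Fin n), r ∈ S → S.ncard = k →
      ℓ ≤ kappaSr H₂ S r ∧ ℓ ≤ lambdaSr H₂ S r := by
    intro S r hr hS
    obtain ⟨d, hd, hdx, hdS⟩ := exists_private_s18 x S (by omega)
    obtain ⟨f, hf, hfd⟩ := exists_trees (A := {v : Fin n | v.val < ℓ}) hH hr x d hx hd
      (fun i => show (x i).val < ℓ from i.2) (fun i h => by
        obtain ⟨j, hj⟩ := (hxA (d i)).mp h
        exact hdx i j hj.symm) hdS
    exact le_of_trees (by omega) f hf hfd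
  -- The infima below are over nonempty sets, so their value is not the junk value `0`.
  obtain ⟨S₀, h0, -, hS₀⟩ := exists_set_ncard hk (by omega : k ≤ n)
    (a := ⟨0, by omega⟩) (b := ⟨1, by omega⟩) (by simp)
  have upper : ∀ e ∈ H₂.Arcs, ∃ S : Set (Fin n), ∃ r ∈ S, S.ncard = k ∧
      ∃ C : Finset (Fin n × Fin n), C.card = ℓ - 1 ∧
        ∀ T, IsSRTree (H₂.deleteArc e) S r T → ∃ e ∈ T, e ∈ C := by
    rintro ⟨u, v⟩ he
    have huv : u ≠ v := fun h => H₂.loopless v (h ▸ he)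
    obtain ⟨S, hu, hv, hS⟩ := exists_set_ncard hk (by omega) huv
    let A : Finset (Fin n) := Finset.univ.image x
    have hA : ∀ w, w ∈ A ↔ w.val < ℓ := fun w => by simp [A, hxA]
    have hAc : A.card = ℓ := by simp [A, Finset.card_image_of_injective _ hx]
    refine ⟨S, u, hu, hS, ?_⟩
    rcases (hH u v).mp he with ⟨h1, h2⟩ | ⟨h1, h2⟩
    · refine ⟨(A.erase u).image fun w => (w, v), ?_, fun T hT => ?_⟩
      · rw [Finset.card_image_of_injective _ fun a b h => (Prod.mk.inj h).1,
          Finset.card_erase_of_mem ((hA u).mpr h1), hAc]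
      · obtain ⟨w, hw⟩ := exists_arc_into hT hv huv.symm
        have hw' := hT.1 hw
        have hadj : H₂.Adj w v := hw'.1
        have hne : (w, v) ≠ (u, v) := hw'.2
        refine ⟨_, hw, Finset.mem_image.mpr ⟨w, Finset.mem_erase.mpr ⟨?_, ?_⟩, rfl⟩⟩
        · rintro rfl
          exact hne rfl
        · rw [hA]
          rw [hH] at hadj
          tauto
    · refine ⟨(A.erase v).image fun w => (u, w), ?_, fun T hT => ?_⟩
      · rw [Finset.card_image_of_injective _ fun a b h => (Prod.mk.inj h).2,
          Finset.card_erase_of_mem ((hA v).mpr h2), hAc]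
      · obtain ⟨w, hw⟩ := exists_arc_from_root hT hv huv.symm
        have hw' := hT.1 hw
        have hadj : H₂.Adj u w := hw'.1
        have hne : (u, w) ≠ (u, v) := hw'.2
        refine ⟨_, hw, Finset.mem_image.mpr ⟨w, Finset.mem_erase.mpr ⟨?_, ?_⟩, rfl⟩⟩
        · rintro rfl
          exact hne rfl
        · rw [hA]
          rw [hH] at hadj
          tauto
  refine ⟨⟨?_, fun e he => ?_⟩, ⟨?_, fun e he => ?_⟩⟩
  · refine le_csInf ⟨_, S₀, _, h0, hS₀, rfl⟩ ?_
    rintro _ ⟨S, r, hr, hS, rfl⟩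
    exact (lower S r hr hS).1
  · obtain ⟨S, r, hr, hS, C, hC, hT⟩ := upper e he
    have h : kappaK (H₂.deleteArc e) k ≤ kappaSr (H₂.deleteArc e) S r :=
      Nat.sInf_le ⟨S, r, hr, hS, rfl⟩
    exact h.trans (hC ▸ kappaSr_le C hT)
  · refine le_csInf ⟨_, S₀, _, h0, hS₀, rfl⟩ ?_
    rintro _ ⟨S, r, hr, hS, rfl⟩
    exact (lower S r hr hS).2
  · obtain ⟨S, r, hr, hS, C, hC, hT⟩ := upper e he
    have h : lambdaK (H₂.deleteArc e) k ≤ lambdaSr (H₂.deleteArc e) S r :=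
      Nat.sInf_le ⟨S, r, hr, hS, rfl⟩
    exact h.trans (hC ▸ lambdaSr_le C hT)

end TreeConn
end
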